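/- arXiv:1406.3299 — 2 statements merged into one kernel-verified Lean document; each statement's English description precedes it below -/
import Mathlib

section
/- For every nonnegative integer n: N_V(k,5,5n+4) = p(5n+4)/5 for 0 ≤ k ≤ 4; N_V(k,7,7n+5) = p(7n+5)/7 for 0 ≤ k ≤ 6; and N_V(k,11,11n+6) = p(11n+6)/11 for 0 ≤ k ≤ 10. -/
/-- A vector partition `(π₁, π₂, π₃)`: `π₁` is a partition into distinct parts and
`π₂, π₃` are arbitrary partitions (each represented as a multiset of positive parts). -/
def IsVectorPartition (x : Multiset ℕ × Multiset ℕ × Multiset ℕ) : Prop :=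
  x.1.Nodup ∧ (∀ i ∈ x.1, 0 < i) ∧ (∀ i ∈ x.2.1, 0 < i) ∧ (∀ i ∈ x.2.2, 0 < i)

/-- The vector crank: `crank(π⃗) = #(π₂) − #(π₃)`. -/
def vcrank (x : Multiset ℕ × Multiset ℕ × Multiset ℕ) : ℤ :=
  (Multiset.card x.2.1 : ℤ) - (Multiset.card x.2.2 : ℤ)

/-- `NV k t n = Σ ω(π⃗)` over vector partitions `π⃗` of `n` with crank `≡ k (mod t)`,
where the weight is `ω(π⃗) = (−1)^{#(π₁)}`: counted as (number with `#(π₁)` even) minus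
(number with `#(π₁)` odd). -/
noncomputable def NV (k t : ℤ) (n : ℕ) : ℤ :=
  (Nat.card {x : Multiset ℕ × Multiset ℕ × Multiset ℕ //
      IsVectorPartition x ∧ x.1.sum + x.2.1.sum + x.2.2.sum = n ∧
      vcrank x ≡ k [ZMOD t] ∧ Even (Multiset.card x.1)} : ℤ) -
  (Nat.card {x : Multiset ℕ × Multiset ℕ × Multiset ℕ //
      IsVectorPartition x ∧ x.1.sum + x.2.1.sum + x.2.2.sum = n ∧
      vcrank x ≡ k [ZMOD t] ∧ ¬ Even (Multiset.card x.1)} : ℤ)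

open PowerSeries Filter
open scoped PowerSeries.WithPiTopology

/-- The exponent `j(j-1)/2`. -/
def tri (j : ℤ) : ℕ := (j * (j - 1) / 2).toNat

lemma two_mul_tri (j : ℤ) : 2 * (tri j : ℤ) = j * (j - 1) := by
  have h : 0 ≤ j * (j - 1) := by
    rcases le_or_gt j 0 with h | h
    · nlinarith
    · exact mul_nonneg h.le (by omega)
  rw [tri, Int.toNat_of_nonneg (Int.ediv_nonneg h (by norm_num)),
    Int.mul_ediv_cancel' (Int.even_mul_pred_self j).two_dvd]

lemma natAbs_le_tri (j : ℤ) : j.natAbs ≤ tri j + 1 := by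
  have h := two_mul_tri j
  zify
  rcases le_or_gt j 0 with hj | hj
  · rw [abs_of_nonpos hj]; nlinarith
  · rw [abs_of_pos hj]
    rcases eq_or_lt_of_le (show 1 ≤ j by omega) with h1 | h1
    · subst h1; omega
    · nlinarith

/-- `∑ i, c i * X ^ e i` -/
noncomputable def qSeries {ι : Type*} (e : ι → ℕ) (c : ι → ℂ) : ℂ⟦X⟧ :=
  ∑' i, monomial (e i) (c i)

/-- Only finitely many exponents lie below any given bound. -/
def LocFin {ι : Type*} (e : ι → ℕ) : Prop := ∀ n, {i | e i ≤ n}.Finite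

section
variable {ι κ : Type*} {e : ι → ℕ} {f : κ → ℕ}

lemma LocFin.summable (he : LocFin e) (c : ι → ℂ) :
    Summable fun i ↦ monomial (e i) (c i) := by
  rw [WithPiTopology.summable_iff_summable_coeff]
  intro d
  refine summable_of_hasFiniteSupport ((he d).subset fun i hi ↦ ?_)
  rw [Function.mem_support, coeff_monomial] at hi
  by_contra h
  simp only [Set.mem_ofPred_eq, not_le] at h
  exact hi (if_neg (by omega))

lemma LocFin.hasSum (he : LocFin e) (c : ι → ℂ) :
    HasSum (fun i ↦ monomial (e i) (c i)) (qSeries e c) := (he.summable c).hasSum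

lemma LocFin.coeff_qSeries (he : LocFin e) (c : ι → ℂ) (n : ℕ) :
    coeff n (qSeries e c) = ∑' i, if n = e i then c i else 0 := by
  rw [qSeries, (he.summable c).map_tsum _ (WithPiTopology.continuous_coeff ℂ n)]
  simp [coeff_monomial]

lemma LocFin.prod (he : LocFin e) (hf : LocFin f) :
    LocFin fun x : ι × κ ↦ e x.1 + f x.2 := fun n ↦ by
  refine ((he n).prod (hf n)).subset fun x hx ↦ ?_
  simp only [Set.mem_ofPred_eq, Set.mem_prod] at *
  omega

lemma LocFin.mul (he : LocFin e) (hf : LocFin f) (c : ι → ℂ) (d : κ → ℂ) :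
    qSeries e c * qSeries f d =
      qSeries (fun x : ι × κ ↦ e x.1 + f x.2) fun x ↦ c x.1 * d x.2 := by
  have h := (he.prod hf).summable (fun x ↦ c x.1 * d x.2)
  simp only [← monomial_mul_monomial] at h
  have := (he.hasSum c).mul (hf.hasSum d) h
  rw [← this.tsum_eq, qSeries]
  simp only [← monomial_mul_monomial]

lemma qSeries_C_mul (r : ℂ) (he : LocFin e) (c : ι → ℂ) :
    C r * qSeries e c = qSeries e fun i ↦ r * c i := by
  rw [qSeries, qSeries, ← (he.summable c).tsum_mul_left]
  congr! 2 with i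
  ext n
  simp [coeff_monomial]

lemma qSeries_comp_equiv (σ : κ ≃ ι) (e : ι → ℕ) (c : ι → ℂ) :
    qSeries (e ∘ σ) (c ∘ σ) = qSeries e c :=
  σ.tsum_eq fun i ↦ monomial (e i) (c i)

lemma LocFin.qSeries_cosets (he : LocFin e) (c : ι → ℂ) {m : ℕ} (φ : Fin m × κ → ι)
    (hφ : Function.Bijective φ) :
    qSeries e c = ∑ r, qSeries (fun x ↦ e (φ (r, x))) fun x ↦ c (φ (r, x)) := by
  have hs := (Equiv.ofBijective φ hφ).summable_iff.mpr (he.summable c)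
  rw [← qSeries_comp_equiv (Equiv.ofBijective φ hφ) e c, qSeries]
  have h2 : ∀ r : Fin m, Summable fun x ↦ monomial (e (φ (r, x))) (c (φ (r, x))) := fun r ↦ by
    refine LocFin.summable (e := fun x ↦ e (φ (r, x))) (fun n ↦ ?_) _
    exact (he n).preimage (f := fun x ↦ φ (r, x)) fun x _ y _ h ↦ by simpa using hφ.1 h
  have := hs.tsum_prod' (fun r ↦ h2 r)
  simpa [qSeries, tsum_fintype] using this
end

/-- The finite product `∏ (1 - q ^ k)`, `1 ≤ k ≤ n`, at `q = X ^ d`. -/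
noncomputable def qPoch (d n : ℕ) : ℂ⟦X⟧ := ∏ k ∈ Finset.range n, (1 - X ^ (d * (k + 1)))

/-- The inverse of `qPoch d j`, extended by zero to negative `j`. -/
noncomputable def invPoch (d : ℕ) (j : ℤ) : ℂ⟦X⟧ := if 0 ≤ j then (qPoch d j.toNat)⁻¹ else 0

lemma constantCoeff_qPoch {d : ℕ} (hd : 0 < d) (n : ℕ) : constantCoeff (qPoch d n) = 1 := by
  rw [qPoch, map_prod]
  refine Finset.prod_eq_one fun k _ ↦ ?_
  simp [hd.ne']

lemma qPoch_mul_invPoch {d : ℕ} (hd : 0 < d) (n : ℕ) : qPoch d n * invPoch d n = 1 := by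
  rw [invPoch, if_pos (by simp), Int.toNat_natCast]
  exact PowerSeries.mul_inv_cancel _ (by simp [constantCoeff_qPoch hd])

lemma invPoch_sub_one {d : ℕ} (hd : 0 < d) (j : ℤ) :
    invPoch d (j - 1) = (1 - X ^ (d * j.toNat)) * invPoch d j := by
  rcases le_or_gt j 0 with h | h
  · rw [invPoch, if_neg (by omega), Int.toNat_of_nonpos h]; simp
  · obtain ⟨n, rfl⟩ : ∃ n : ℕ, j = n + 1 := ⟨(j - 1).toNat, by omega⟩
    have h1 := qPoch_mul_invPoch hd n
    have h2 := qPoch_mul_invPoch hd (n + 1)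
    rw [qPoch, Finset.prod_range_succ, ← qPoch] at h2
    have h3 : ((n : ℤ) + 1).toNat = n + 1 := by omega
    rw [h3, add_sub_cancel_right]
    push_cast at h2
    calc invPoch d n = invPoch d n * (qPoch d n * (1 - X ^ (d * (n + 1))) * invPoch d (n + 1)) := by
          rw [h2, mul_one]
      _ = (qPoch d n * invPoch d n) * ((1 - X ^ (d * (n + 1))) * invPoch d (n + 1)) := by ring
      _ = _ := by rw [h1, one_mul]

lemma invPoch_of_neg {d : ℕ} {j : ℤ} (hj : j < 0) : invPoch d j = 0 := by
  rw [invPoch, if_neg (by omega)]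

/-- Pascal's rule for the Gaussian binomial coefficients. -/
lemma pascal_invPoch {d : ℕ} (hd : 0 < d) {N : ℕ} {i l : ℤ} (h : i + l = N + 1) :
    qPoch d (N + 1) * (invPoch d i * invPoch d l) =
      qPoch d N * (invPoch d i * invPoch d (l - 1)) +
      X ^ (d * l.toNat) * (qPoch d N * (invPoch d (i - 1) * invPoch d l)) := by
  rcases lt_or_ge i 0 with hi | hi
  · simp [invPoch_of_neg hi, invPoch_of_neg (show i - 1 < 0 by omega)]
  rcases lt_or_ge l 0 with hl | hl
  · simp [invPoch_of_neg hl, invPoch_of_neg (show l - 1 < 0 by omega)]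
  rw [invPoch_sub_one hd, invPoch_sub_one hd, qPoch, Finset.prod_range_succ, ← qPoch,
    show d * (N + 1) = d * l.toNat + d * i.toNat by rw [← mul_add]; congr 1; omega, pow_add]
  ring

lemma hasSum_finite_jacobi {d : ℕ} (hd : 0 < d) {z : ℂ} (hz : z ≠ 0) (m n : ℕ) :
    HasSum (fun j : ℤ ↦ qPoch d (m + n) * (invPoch d (n + j) * invPoch d (m - j)) *
        monomial (d * tri j) ((-z) ^ j))
      ((∏ k ∈ Finset.range m, (1 - C z * X ^ (d * k))) *
        ∏ k ∈ Finset.range n, (1 - C z⁻¹ * X ^ (d * (k + 1)))) := by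
  have hz' : -z ≠ 0 := neg_ne_zero.mpr hz
  induction m with
  | zero =>
    induction n with
    | zero =>
      have := hasSum_single (f := fun j : ℤ ↦ qPoch d (0 + 0) *
        (invPoch d ((0 : ℕ) + j) * invPoch d ((0 : ℕ) - j)) * monomial (d * tri j) ((-z) ^ j)) 0
        (fun j hj ↦ by
          rcases lt_or_gt_of_ne hj with h | h
          · rw [invPoch_of_neg (j := (0 : ℕ) + j) (by simpa using h)]; simp
          · rw [invPoch_of_neg (j := (0 : ℕ) - j) (by simpa using h)]; simp)
      simpa [tri, invPoch, qPoch] using this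
    | succ n ih =>
      have h1 := ih.mul_left (C z⁻¹ * X ^ (d * (n + 1)))
      rw [← (Equiv.addRight (1 : ℤ)).hasSum_iff] at h1
      have h2 := ih.sub h1
      rw [Finset.prod_range_succ]
      convert h2 using 1
      · rfl
      · funext j
        simp only [Function.comp_apply, Equiv.coe_addRight]
        have hp := pascal_invPoch hd (N := n) (i := -j) (l := n + 1 + j) (by ring)
        have e1 : monomial (d * tri (j + 1)) ((-z) ^ (j + 1)) =
            C (-z) * (C ((-z) ^ j) * X ^ (d * tri (j + 1))) := by
          rw [monomial_eq_C_mul_X_pow, zpow_add₀ hz', zpow_one, map_mul]; ring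
        rw [e1, monomial_eq_C_mul_X_pow]
        have hC : C z⁻¹ * C (-z) = (-1 : ℂ⟦X⟧) := by
          rw [← map_mul]; simp [hz]
        have key : X ^ (d * (n + 1)) * X ^ (d * tri (j + 1)) * invPoch d (n + 1 + j) =
            X ^ (d * (n + 1 + j).toNat) * X ^ (d * tri j) * invPoch d (n + 1 + j) := by
          rcases lt_or_ge ((n : ℤ) + 1 + j) 0 with h | h
          · simp [invPoch_of_neg h]
          · rw [← pow_add, ← pow_add, ← mul_add, ← mul_add]
            congr 3
            have := two_mul_tri j
            have := two_mul_tri (j + 1)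
            zify
            rw [Int.toNat_of_nonneg h]
            linarith
        have a1 : ((n + 1 : ℕ) : ℤ) + j = n + 1 + j := by push_cast; ring
        have a2 : (n : ℤ) + (j + 1) = n + 1 + j := by ring
        have a3 : ((0 : ℕ) : ℤ) - (j + 1) = -j - 1 := by push_cast; ring
        have a4 : ((0 : ℕ) : ℤ) - j = -j := by push_cast; ring
        have a5 : (n : ℤ) + j = n + 1 + j - 1 := by ring
        rw [a1, a2, a3, a4, a5]
        simp only [zero_add]
        linear_combination (C ((-z) ^ j) * X ^ (d * tri j)) * hp -
          (qPoch d n * invPoch d (-j - 1) * C ((-z) ^ j)) * key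
          + (X ^ (d * (n + 1)) * X ^ (d * tri (j + 1)) * invPoch d (n + 1 + j) *
            qPoch d n * invPoch d (-j - 1) * C ((-z) ^ j)) * hC
      · ring
  | succ m ih =>
    have h1 := ih.mul_left (C z * X ^ (d * m))
    rw [← (Equiv.subRight (1 : ℤ)).hasSum_iff] at h1
    have h2 := ih.sub h1
    rw [Finset.prod_range_succ]
    convert h2 using 1
    · rfl
    · funext j
      simp only [Function.comp_apply, Equiv.subRight_apply]
      have hp := pascal_invPoch hd (N := m + n) (i := n + j) (l := m + 1 - j) (by push_cast; ring)
      have e1 : monomial (d * tri j) ((-z) ^ j) =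
          C (-z) * (C ((-z) ^ (j - 1)) * X ^ (d * tri j)) := by
        rw [monomial_eq_C_mul_X_pow, ← mul_assoc, ← map_mul, ← zpow_one_add₀ hz']
        congr 3; ring
      rw [e1, monomial_eq_C_mul_X_pow]
      have key : X ^ (d * m) * X ^ (d * tri (j - 1)) * invPoch d (m + 1 - j) =
          X ^ (d * (m + 1 - j).toNat) * X ^ (d * tri j) * invPoch d (m + 1 - j) := by
        rcases lt_or_ge ((m : ℤ) + 1 - j) 0 with h | h
        · simp [invPoch_of_neg h]
        · rw [← pow_add, ← pow_add, ← mul_add, ← mul_add]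
          congr 3
          have := two_mul_tri j
          have := two_mul_tri (j - 1)
          zify
          rw [Int.toNat_of_nonneg h]
          linarith
      have a0 : m + 1 + n = m + n + 1 := by ring
      have a1 : ((m + 1 : ℕ) : ℤ) - j = m + 1 - j := by push_cast; ring
      have a2 : (m : ℤ) - (j - 1) = m + 1 - j := by ring
      have a3 : (n : ℤ) + (j - 1) = n + j - 1 := by ring
      have a5 : (m : ℤ) - j = m + 1 - j - 1 := by ring
      rw [a0, a1, a2, a3, a5, map_neg]
      linear_combination (-C z * C ((-z) ^ (j - 1)) * X ^ (d * tri j)) * hp +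
          (qPoch d (m + n) * invPoch d (n + j - 1) * C ((-z) ^ (j - 1)) * C z) * key
    · ring

/-- The infinite product `∏ (1 - z q ^ n)`, `n ≥ 1`, at `q = X ^ d`. -/
noncomputable def eulerProd (d : ℕ) (z : ℂ) : ℂ⟦X⟧ := ∏' n : ℕ, (1 - C z * X ^ (d * (n + 1)))

/-- The theta series `∑ (-z) ^ j q ^ (j(j-1)/2)` at `q = X ^ d`. -/
noncomputable def theta (d : ℕ) (z : ℂ) : ℂ⟦X⟧ := qSeries (fun j ↦ d * tri j) fun j ↦ (-z) ^ j

lemma locFin_of_natAbs_le {e : ℤ → ℕ} (h : ∀ j, j.natAbs ≤ e j + 1) : LocFin e := fun n ↦ by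
  refine (Set.finite_Icc (-(n + 1 : ℤ)) (n + 1)).subset fun j hj ↦ ?_
  have := h j
  simp only [Set.mem_ofPred_eq, Set.mem_Icc] at *
  omega

lemma locFin_tri {d : ℕ} (hd : 0 < d) : LocFin fun j ↦ d * tri j :=
  locFin_of_natAbs_le fun j ↦ by
    have := natAbs_le_tri j
    have := Nat.le_mul_of_pos_left (tri j) hd
    omega

lemma multipliable_eulerProd {d : ℕ} (hd : 0 < d) (z : ℂ) :
    Multipliable fun n : ℕ ↦ (1 - C z * X ^ (d * (n + 1)) : ℂ⟦X⟧) := by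
  simp_rw [sub_eq_add_neg]
  apply WithPiTopology.multipliable_one_add_of_tendsto_order_atTop_nhds_top
  refine ENat.tendsto_nhds_top_iff_natCast_lt.mpr fun n ↦ eventually_atTop.mpr ⟨n, fun m hm ↦ ?_⟩
  rw [order_neg]
  grw [← le_order_mul]
  refine lt_add_of_nonneg_of_lt (by simp) ?_
  rw [order_X_pow]
  norm_cast
  nlinarith

lemma dvd_qPoch_mul_invPoch_sub_one {d : ℕ} (hd : 0 < d) {i : ℤ} (hi : 0 ≤ i) {N : ℕ} (hN : i ≤ N) :
    X ^ (d * (i.toNat + 1)) ∣ qPoch d N * invPoch d i - 1 := by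
  lift i to ℕ using hi
  rw [Int.toNat_natCast]
  replace hN : i ≤ N := by exact_mod_cast hN
  induction N, hN using Nat.le_induction with
  | base => simp [qPoch_mul_invPoch hd]
  | succ N h ih =>
    rw [qPoch, Finset.prod_range_succ, ← qPoch,
      show qPoch d N * (1 - X ^ (d * (N + 1))) * invPoch d i - 1 =
        (qPoch d N * invPoch d i - 1) - X ^ (d * (N + 1)) * (qPoch d N * invPoch d i) by ring]
    refine dvd_sub ih (Dvd.dvd.mul_right (pow_dvd_pow _ ?_) _)
    exact Nat.mul_le_mul_left _ (by omega)

lemma X_pow_dvd_jacobi_term {d : ℕ} (hd : 0 < d) (n : ℕ) (j : ℤ) (r : ℂ) :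
    X ^ n ∣ (qPoch d n * (qPoch d (n + 1 + n) *
      (invPoch d (n + j) * invPoch d ((n + 1 : ℕ) - j))) - 1) * monomial (d * tri j) r := by
  have hj := natAbs_le_tri j
  have key : X ^ (d * (n + 1 - j.natAbs)) ∣ qPoch d n * (qPoch d (n + 1 + n) *
      (invPoch d (n + j) * invPoch d ((n + 1 : ℕ) - j))) - 1 := by
    rcases lt_or_ge (n + 1) j.natAbs with h | h
    · rw [Nat.sub_eq_zero_of_le h.le]; simp
    rcases eq_or_ne (j.natAbs) (n + 1) with h' | h'
    · simp [h']
    have a1 : ∀ {A B : ℂ⟦X⟧} {s : ℕ}, X ^ s ∣ A - 1 → X ^ s ∣ B - 1 → X ^ s ∣ A * B - 1 := by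
      intro A B s hA hB
      rw [show A * B - 1 = (A - 1) * B + (B - 1) by ring]
      exact dvd_add (hA.mul_right _) hB
    have a2 : ∀ {i : ℤ} {N : ℕ}, 0 ≤ i → i ≤ N → n + 1 - j.natAbs ≤ i.toNat + 1 →
        X ^ (d * (n + 1 - j.natAbs)) ∣ qPoch d N * invPoch d i - 1 := fun h1 h2 h3 ↦
      (pow_dvd_pow _ (Nat.mul_le_mul_left _ h3)).trans (dvd_qPoch_mul_invPoch_sub_one hd h1 h2)
    rcases le_or_gt j 0 with h0 | h0
    · rw [show qPoch d n * (qPoch d (n + 1 + n) * (invPoch d (n + j) *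
          invPoch d ((n + 1 : ℕ) - j))) = (qPoch d n * invPoch d (n + j)) *
          (qPoch d (n + 1 + n) * invPoch d ((n + 1 : ℕ) - j)) by ring]
      exact a1 (a2 (by omega) (by omega) (by omega)) (a2 (by omega) (by omega) (by omega))
    · rw [show qPoch d n * (qPoch d (n + 1 + n) * (invPoch d (n + j) *
          invPoch d ((n + 1 : ℕ) - j))) = (qPoch d n * invPoch d ((n + 1 : ℕ) - j)) *
          (qPoch d (n + 1 + n) * invPoch d (n + j)) by ring]
      exact a1 (a2 (by omega) (by omega) (by omega)) (a2 (by omega) (by omega) (by omega))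
  have h2 : (X : ℂ⟦X⟧) ^ (d * tri j) ∣ monomial (d * tri j) r := by
    rw [monomial_eq_C_mul_X_pow]; exact dvd_mul_left _ _
  refine dvd_trans ?_ (mul_dvd_mul key h2)
  rw [← pow_add, ← mul_add]
  refine pow_dvd_pow _ (le_trans ?_ (Nat.le_mul_of_pos_left _ hd))
  omega

/-- Jacobi's triple product identity. -/
theorem theta_eq_eulerProd {d : ℕ} (hd : 0 < d) {z : ℂ} (hz : z ≠ 0) :
    theta d z = C (1 - z) * (eulerProd d 1 * eulerProd d z * eulerProd d z⁻¹) := by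
  have hm := fun w ↦ (multipliable_eulerProd hd w).hasProd.tendsto_prod_nat
  have lim1 := (((hm 1).mul (hm z)).mul (hm z⁻¹)).const_mul (C (1 - z))
  refine tendsto_nhds_unique ?_ lim1
  rw [WithPiTopology.tendsto_iff_coeff_tendsto]
  refine fun e ↦ tendsto_atTop_of_eventually_const (i₀ := e + 1) fun n hn ↦ ?_
  have h1 := ((hasSum_finite_jacobi hd hz (n + 1) n).mul_left (qPoch d n)).sub
    ((locFin_tri hd).hasSum fun j ↦ (-z) ^ j)
  have h2 := h1.map (coeff e) (WithPiTopology.continuous_coeff ℂ e)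
  have h3 : ∀ j : ℤ, coeff e (qPoch d n * (qPoch d (n + 1 + n) *
      (invPoch d (n + j) * invPoch d ((n + 1 : ℕ) - j)) * monomial (d * tri j) ((-z) ^ j)) -
      monomial (d * tri j) ((-z) ^ j)) = 0 := fun j ↦ by
    refine (X_pow_dvd_iff.mp ?_) e (Nat.lt_of_succ_le hn)
    have := X_pow_dvd_jacobi_term hd n j ((-z) ^ j)
    convert this using 1
    ring
  have h4 := h2.unique (by
    convert (hasSum_zero (α := ℂ) (β := ℤ)) using 1
    funext j
    exact h3 j)
  rw [map_sub, sub_eq_zero] at h4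
  refine Eq.trans ?_ h4
  congr 1
  rw [Finset.prod_range_succ', qPoch]
  simp only [map_one, one_mul, map_sub, mul_zero, pow_zero, mul_one]
  ring

lemma qSeries_eq_C_mul_mul {ι κ : Type*} {e : ι → ℕ} {f : κ → ℕ} (he : LocFin e) (hf : LocFin f)
    {g : ι × κ → ℕ} {w : ι × κ → ℂ} (r : ℂ) (c : ι → ℂ) (d : κ → ℂ)
    (hg : ∀ i k, g (i, k) = e i + f k) (hw : ∀ i k, w (i, k) = r * (c i * d k)) :
    qSeries g w = C r * (qSeries e c * qSeries f d) := by
  rw [he.mul hf, qSeries_C_mul _ (he.prod hf)]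
  congr 1
  · exact funext fun x ↦ hg x.1 x.2
  · exact funext fun x ↦ hw x.1 x.2

lemma neg_one_zpow_add_two_mul (k l : ℤ) : (-1 : ℂ) ^ (k + 2 * l) = (-1) ^ k := by
  rw [zpow_add₀ (by norm_num), zpow_mul]
  norm_num

lemma neg_zpow_eq (a : ℂ) (k : ℤ) : (-a) ^ k = (-1) ^ k * a ^ k := by
  rw [← mul_zpow, neg_one_mul]

lemma natCast_natAbs_sq (j : ℤ) : ((j.natAbs ^ 2 : ℕ) : ℤ) = j ^ 2 := by
  push_cast
  exact sq_abs j

/-- `∑ a ^ (2u) q ^ (u² - u)` -/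
noncomputable def oddTheta (a : ℂ) : ℂ⟦X⟧ := qSeries (fun u ↦ 2 * tri u) fun u ↦ a ^ (2 * u)

/-- `∑ a ^ (2u) q ^ u²` -/
noncomputable def evenTheta (a : ℂ) : ℂ⟦X⟧ := qSeries (fun u : ℤ ↦ u.natAbs ^ 2) fun u ↦ a ^ (2 * u)

lemma locFin_sq : LocFin fun u : ℤ ↦ u.natAbs ^ 2 :=
  locFin_of_natAbs_le fun j ↦ by nlinarith [Nat.zero_le j.natAbs, sq_nonneg ((j.natAbs : ℤ) - 1)]

lemma locFin_pentagonal : LocFin pentagonal := fun n ↦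
  (Set.finite_Iic n).preimage pentagonal_injective.injOn

lemma locFin_pentagonal_neg : LocFin fun k ↦ pentagonal (-k) := fun n ↦
  (Set.finite_Iic n).preimage (pentagonal_injective.comp neg_injective).injOn

lemma theta_mul_theta_div {a b : ℂ} (ha : a ≠ 0) (hb : b ≠ 0) :
    theta 1 (a * b) * theta 1 (a / b) =
      oddTheta a * evenTheta b - C (a / b) * (evenTheta a * oddTheta b) := by
  have h1 := locFin_tri one_pos
  rw [theta, theta, h1.mul h1, (h1.prod h1).qSeries_cosets _
    (fun x : Fin 2 × (ℤ × ℤ) ↦ (x.2.1 + x.2.2, x.2.1 - x.2.2 + (x.1 : ℕ))) ?_, Fin.sum_univ_two,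
    show oddTheta a * evenTheta b - C (a / b) * (evenTheta a * oddTheta b) = C 1 *
      (oddTheta a * evenTheta b) + C (-(a / b)) * (evenTheta a * oddTheta b) by
        rw [map_one, map_neg]; ring]
  · congr 1
    · refine qSeries_eq_C_mul_mul (locFin_tri two_pos) locFin_sq 1 _ _ (fun u v ↦ ?_) fun u v ↦ ?_
      · have := two_mul_tri (u + v)
        have := two_mul_tri (u - v)
        have := two_mul_tri u
        have := natCast_natAbs_sq v
        zify at *
        simp only [Fin.val_zero, Nat.cast_zero, add_zero]
        linarith
      · simp only [Fin.val_zero, Nat.cast_zero, add_zero]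
        rw [neg_zpow_eq, neg_zpow_eq (a / b), show u - v = u + v + 2 * (-v) by ring,
          neg_one_zpow_add_two_mul, mul_zpow, div_zpow]
        have : (-1 : ℂ) ^ (u + v) * (-1) ^ (u + v) = 1 := by
          rw [← mul_zpow]; norm_num
        rw [mul_mul_mul_comm, this, show u + v + 2 * (-v) = u - v by ring]
        simp only [zpow_add₀ ha, zpow_add₀ hb, zpow_sub₀ ha, zpow_sub₀ hb, two_mul]
        field_simp
    · refine qSeries_eq_C_mul_mul locFin_sq (locFin_tri two_pos) _ _ _ (fun u v ↦ ?_) fun u v ↦ ?_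
      · have := two_mul_tri (u + v)
        have := two_mul_tri (u - v + 1)
        have := two_mul_tri v
        have := natCast_natAbs_sq u
        zify at *
        simp only [Fin.val_one, Nat.cast_one]
        linarith
      · simp only [Fin.val_one, Nat.cast_one]
        rw [neg_zpow_eq, neg_zpow_eq (a / b), show u - v + 1 = u + v + 1 + 2 * (-v) by ring,
          neg_one_zpow_add_two_mul, mul_zpow, div_zpow]
        have : (-1 : ℂ) ^ (u + v) * (-1) ^ (u + v + 1) = -1 := by
          rw [zpow_add_one₀ (by norm_num), ← mul_assoc, ← mul_zpow]; norm_num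
        rw [mul_mul_mul_comm, this, show u + v + 1 + 2 * (-v) = u - v + 1 by ring]
        simp only [zpow_add₀ ha, zpow_add₀ hb, zpow_sub₀ ha, zpow_sub₀ hb, two_mul]
        field_simp
  · constructor
    · rintro ⟨r, u, v⟩ ⟨r', u', v'⟩ h
      simp only [Prod.mk.injEq] at h ⊢
      refine ⟨?_, ?_, ?_⟩ <;> omega
    · rintro ⟨m, n⟩
      have : ((m + n) % 2).toNat < 2 := by omega
      refine ⟨(⟨((m + n) % 2).toNat, this⟩, (m + n) / 2, m - (m + n) / 2), ?_⟩
      simp only [Prod.mk.injEq]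
      refine ⟨?_, ?_⟩ <;> omega

/-- `∑ (-1) ^ k (a ^ (3k) q ^ (k(3k-1)/2) - a ^ (3k+1) q ^ (k(3k+1)/2))` -/
noncomputable def quintuple (a : ℂ) : ℂ⟦X⟧ :=
  qSeries pentagonal (fun k ↦ (-a ^ 3) ^ k) -
    C a * qSeries (fun k ↦ pentagonal (-k)) fun k ↦ (-a ^ 3) ^ k

/-- A theta constant `∑ q ^ e l`. -/
noncomputable def thetaConst (e : ℤ → ℕ) : ℂ⟦X⟧ := qSeries e fun _ ↦ 1

lemma neg_zpow_mul_zpow {a : ℂ} (ha : a ≠ 0) {n m k : ℤ} (l s : ℤ) (h : n = k + 2 * l + s)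
    (h' : n + m = 3 * k + s) : (-a) ^ n * a ^ m = (-a) ^ s * ((-a ^ 3) ^ k * 1) := by
  rw [neg_zpow_eq, mul_assoc, ← zpow_add₀ ha, h', h, show k + 2 * l + s = k + s + 2 * l by ring,
    neg_one_zpow_add_two_mul, neg_zpow_eq a s, neg_zpow_eq (a ^ 3) k, zpow_add₀ ha, zpow_mul,
    zpow_add₀ (by norm_num), zpow_ofNat]
  ring

lemma locFin_two_mul_pentagonal : LocFin fun l ↦ 2 * pentagonal l := fun n ↦
  (locFin_pentagonal n).subset fun l hl ↦ by
    simp only [Set.mem_ofPred_eq] at *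
    omega

lemma locFin_six_mul_tri_add_one : LocFin fun l ↦ 6 * tri l + 1 :=
  locFin_of_natAbs_le fun j ↦ by have := natAbs_le_tri j; omega

lemma locFin_three_mul_sq : LocFin fun l : ℤ ↦ 3 * l.natAbs ^ 2 := fun n ↦
  (locFin_sq n).subset fun l hl ↦ by
    simp only [Set.mem_ofPred_eq] at *
    omega

lemma natCast_octagonal (l : ℤ) : (((3 * l ^ 2 - 2 * l).toNat : ℕ) : ℤ) = 3 * l ^ 2 - 2 * l := by
  refine Int.toNat_of_nonneg ?_
  rcases le_or_gt l 0 with h | h <;> nlinarith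

lemma locFin_octagonal : LocFin fun l : ℤ ↦ (3 * l ^ 2 - 2 * l).toNat :=
  locFin_of_natAbs_le fun l ↦ by
    have := natCast_octagonal l
    zify
    rw [this]
    rcases le_or_gt l 0 with h | h
    · rw [abs_of_nonpos h]; nlinarith
    · rw [abs_of_pos h]; nlinarith

lemma theta_mul_evenTheta {a : ℂ} (ha : a ≠ 0) :
    theta 1 a * evenTheta a = thetaConst (fun l ↦ 2 * pentagonal l) * quintuple a -
      C a⁻¹ * (thetaConst (fun l ↦ 6 * tri l + 1) * theta 3 (a ^ 3)) := by
  have h1 := locFin_tri one_pos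
  rw [theta, evenTheta, h1.mul locFin_sq, (h1.prod locFin_sq).qSeries_cosets _
    (fun x : Fin 3 × (ℤ × ℤ) ↦ ![(x.2.1 + 2 * x.2.2, x.2.1 - x.2.2),
      (x.2.1 - 2 * x.2.2 + 1, x.2.1 + x.2.2), (x.2.1 + 2 * x.2.2 - 1, x.2.1 - x.2.2)] x.1) ?_,
    Fin.sum_univ_three]
  · simp only [Matrix.cons_val]
    rw [qSeries_eq_C_mul_mul locFin_pentagonal locFin_two_mul_pentagonal ((-a) ^ (0 : ℤ))
        (fun k ↦ (-a ^ 3) ^ k) (fun _ ↦ 1) (fun k l ↦ ?_)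
        (fun k l ↦ neg_zpow_mul_zpow ha l 0 (by ring) (by ring)),
      qSeries_eq_C_mul_mul locFin_pentagonal_neg locFin_two_mul_pentagonal ((-a) ^ (1 : ℤ))
        (fun k ↦ (-a ^ 3) ^ k) (fun _ ↦ 1) (fun k l ↦ ?_)
        (fun k l ↦ neg_zpow_mul_zpow ha (-l) 1 (by ring) (by ring)),
      qSeries_eq_C_mul_mul (locFin_tri three_pos) locFin_six_mul_tri_add_one ((-a) ^ (-1 : ℤ))
        (fun k ↦ (-a ^ 3) ^ k) (fun _ ↦ 1) (fun k l ↦ ?_)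
        (fun k l ↦ neg_zpow_mul_zpow ha l (-1) (by ring) (by ring))]
    · simp only [zpow_zero, zpow_one, zpow_neg, inv_neg, map_neg, map_one, quintuple, thetaConst,
        theta]
      ring
    · have := two_mul_tri (k + 2 * l - 1)
      have := natCast_natAbs_sq (k - l)
      have := two_mul_tri k
      have := two_mul_tri l
      zify at *
      linarith
    · have := two_mul_tri (k - 2 * l + 1)
      have := natCast_natAbs_sq (k + l)
      have := two_mul_natCast_pentagonal (-k)
      have := two_mul_natCast_pentagonal l
      zify at *
      linarith
    · have := two_mul_tri (k + 2 * l)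
      have := natCast_natAbs_sq (k - l)
      have := two_mul_natCast_pentagonal k
      have := two_mul_natCast_pentagonal l
      zify at *
      linarith
  · constructor
    · rintro ⟨r, u, v⟩ ⟨r', u', v'⟩ h
      fin_cases r <;> fin_cases r' <;> simp at h ⊢ <;> omega
    · rintro ⟨m, n⟩
      have h : (m + 2 * n) % 3 = 0 ∨ (m + 2 * n) % 3 = 1 ∨ (m + 2 * n) % 3 = 2 := by omega
      rcases h with h | h | h
      · refine ⟨(0, (m + 2 * n) / 3, (m + 2 * n) / 3 - n), ?_⟩
        simp only [Matrix.cons_val, Prod.mk.injEq]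
        omega
      · refine ⟨(1, (m + 2 * n) / 3, n - (m + 2 * n) / 3), ?_⟩
        simp only [Matrix.cons_val, Prod.mk.injEq]
        omega
      · refine ⟨(2, (m + 2 * n) / 3 + 1, (m + 2 * n) / 3 + 1 - n), ?_⟩
        simp only [Matrix.cons_val, Prod.mk.injEq]
        omega

lemma theta_mul_oddTheta {a : ℂ} (ha : a ≠ 0) :
    theta 1 a * oddTheta a = thetaConst (fun l ↦ 3 * l.natAbs ^ 2) * theta 3 (a ^ 3) -
      C a * (thetaConst (fun l ↦ (3 * l ^ 2 - 2 * l).toNat) * quintuple a) := by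
  have h1 := locFin_tri one_pos
  have h2 := locFin_tri two_pos
  rw [theta, oddTheta, h1.mul h2, (h1.prod h2).qSeries_cosets _
    (fun x : Fin 3 × (ℤ × ℤ) ↦ ![(x.2.1 + 2 * x.2.2, x.2.1 - x.2.2),
      (x.2.1 - 2 * x.2.2 + 1, x.2.1 + x.2.2), (x.2.1 + 2 * x.2.2, x.2.1 + 1 - x.2.2)] x.1) ?_,
    Fin.sum_univ_three]
  · simp only [Matrix.cons_val]
    rw [qSeries_eq_C_mul_mul (locFin_tri three_pos) locFin_three_mul_sq ((-a) ^ (0 : ℤ))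
        (fun k ↦ (-a ^ 3) ^ k) (fun _ ↦ 1) (fun k l ↦ ?_)
        (fun k l ↦ neg_zpow_mul_zpow ha l 0 (by ring) (by ring)),
      qSeries_eq_C_mul_mul locFin_pentagonal locFin_octagonal ((-a) ^ (1 : ℤ))
        (fun k ↦ (-a ^ 3) ^ k) (fun _ ↦ 1) (fun k l ↦ ?_)
        (fun k l ↦ neg_zpow_mul_zpow ha (-l) 1 (by ring) (by ring)),
      qSeries_eq_C_mul_mul locFin_pentagonal_neg locFin_octagonal ((-a) ^ (2 : ℤ))
        (fun k ↦ (-a ^ 3) ^ k) (fun _ ↦ 1) (fun k l ↦ ?_)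
        (fun k l ↦ neg_zpow_mul_zpow ha (l - 1) 2 (by ring) (by ring))]
    · rw [show (-a) ^ (2 : ℤ) = a * a by norm_cast; ring]
      simp only [zpow_zero, zpow_one, map_neg, map_one, map_mul, quintuple, thetaConst, theta]
      ring
    · have := two_mul_tri (k + 2 * l)
      have := two_mul_tri (k + 1 - l)
      have := two_mul_natCast_pentagonal (-k)
      have := natCast_octagonal l
      zify at *
      linarith
    · have := two_mul_tri (k - 2 * l + 1)
      have := two_mul_tri (k + l)
      have := two_mul_natCast_pentagonal k
      have := natCast_octagonal l
      zify at *
      linarith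
    · have := two_mul_tri (k + 2 * l)
      have := two_mul_tri (k - l)
      have := two_mul_tri k
      have := natCast_natAbs_sq l
      zify at *
      linarith
  · constructor
    · rintro ⟨r, u, v⟩ ⟨r', u', v'⟩ h
      fin_cases r <;> fin_cases r' <;> simp at h ⊢ <;> omega
    · rintro ⟨m, n⟩
      have h : (m + 2 * n) % 3 = 0 ∨ (m + 2 * n) % 3 = 1 ∨ (m + 2 * n) % 3 = 2 := by omega
      rcases h with h | h | h
      · refine ⟨(0, (m + 2 * n) / 3, (m + 2 * n) / 3 - n), ?_⟩
        simp only [Matrix.cons_val, Prod.mk.injEq]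
        omega
      · refine ⟨(1, (m + 2 * n) / 3, n - (m + 2 * n) / 3), ?_⟩
        simp only [Matrix.cons_val, Prod.mk.injEq]
        omega
      · refine ⟨(2, (m + 2 * n) / 3, (m + 2 * n) / 3 + 1 - n), ?_⟩
        simp only [Matrix.cons_val, Prod.mk.injEq]
        omega

/-- The constant in Winquist's identity. -/
noncomputable def winquistConst : ℂ⟦X⟧ :=
  thetaConst (fun l ↦ 2 * pentagonal l) * thetaConst (fun l ↦ 3 * l.natAbs ^ 2) -
    thetaConst (fun l ↦ 6 * tri l + 1) * thetaConst (fun l ↦ (3 * l ^ 2 - 2 * l).toNat)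

lemma theta_mul_theta_mul_theta_mul_theta {a b : ℂ} (ha : a ≠ 0) (hb : b ≠ 0) :
    theta 1 a * theta 1 b * (theta 1 (a * b) * theta 1 (a / b)) = winquistConst *
      (theta 3 (a ^ 3) * quintuple b - C (a / b) * (quintuple a * theta 3 (b ^ 3))) := by
  have h1 := theta_mul_evenTheta ha
  have h2 := theta_mul_oddTheta ha
  have h3 := theta_mul_evenTheta hb
  have h4 := theta_mul_oddTheta hb
  have ea : (C a * C a⁻¹ : ℂ⟦X⟧) = 1 := by rw [← map_mul, mul_inv_cancel₀ ha, map_one]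
  have eb : (C b * C b⁻¹ : ℂ⟦X⟧) = 1 := by rw [← map_mul, mul_inv_cancel₀ hb, map_one]
  rw [theta_mul_theta_div ha hb, show ∀ A B U V W Z s : ℂ⟦X⟧, A * B * (U * V - s * (W * Z)) =
    (A * U) * (B * V) - s * ((A * W) * (B * Z)) by intros; ring, h1, h2, h3, h4, winquistConst,
    div_eq_mul_inv, map_mul]
  generalize thetaConst _ = w, thetaConst _ = x, thetaConst _ = y, thetaConst _ = z,
    quintuple a = s, quintuple b = t, theta 3 _ = u, theta 3 _ = v
  linear_combination (z * v * C b⁻¹ * w * u - v * y * t * w * (C b * C b⁻¹)) * ea +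
    (C a * y * s * x * t - v * y * t * w) * eb

/-- Splitting by the roots of unity of order `t`. -/
lemma prod_eulerProd_mul_pow {t : ℕ} (ht : 0 < t) {ζ : ℂ} (hζ : IsPrimitiveRoot ζ t) (a : ℂ) :
    ∏ k ∈ Finset.range t, eulerProd 1 (ζ ^ k * a) = eulerProd t (a ^ t) := by
  simp only [eulerProd]
  rw [← Multipliable.tprod_finsetProd fun k _ ↦ multipliable_eulerProd one_pos _]
  congr! 2 with n
  have h := X_pow_sub_C_eq_prod (hζ.map_of_injective (f := (C : ℂ →+* ℂ⟦X⟧)) C_injective) ht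
    (α := C a * X ^ (n + 1)) rfl
  replace h := congrArg (Polynomial.eval 1) h
  simp only [Polynomial.eval_sub, Polynomial.eval_pow, Polynomial.eval_X, Polynomial.eval_C,
    Polynomial.eval_prod, one_pow] at h
  rw [mul_pow, ← map_pow, ← pow_mul, mul_comm (n + 1)] at h
  rw [h]
  refine Finset.prod_congr rfl fun k _ ↦ ?_
  rw [one_mul, map_mul, map_pow, mul_assoc]

lemma theta_one {d : ℕ} (hd : 0 < d) : theta d 1 = 0 := by
  rw [theta_eq_eulerProd hd one_ne_zero, sub_self, map_zero, zero_mul]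

lemma qSeries_pentagonal : qSeries pentagonal (fun k ↦ (-1) ^ k) = eulerProd 1 1 := by
  rw [eulerProd]
  simp only [map_one, one_mul]
  rw [WithPiTopology.tprod_one_sub_X_pow]
  refine HasSum.unique (locFin_pentagonal.hasSum _) ?_
  convert WithPiTopology.hasSum_pentagonalSeries ℂ using 2 with k
  rw [monomial_eq_C_mul_X_pow]
  congr 1
  rcases Int.even_or_odd k with h | h
  · simp [h.neg_one_zpow, Int.negOnePow_even _ h]
  · simp [h.neg_one_zpow, Int.negOnePow_odd _ h]

lemma qSeries_pentagonal_neg :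
    qSeries (fun k ↦ pentagonal (-k)) (fun k ↦ (-1) ^ k) = eulerProd 1 1 := by
  rw [← qSeries_pentagonal, ← qSeries_comp_equiv (Equiv.neg ℤ) pentagonal]
  congr 1
  ext k
  simp [← inv_zpow]

lemma quintuple_of_pow_three {ω : ℂ} (hω : ω ^ 3 = 1) :
    quintuple ω = C (1 - ω) * eulerProd 1 1 := by
  rw [quintuple, hω, qSeries_pentagonal, qSeries_pentagonal_neg, map_sub, map_one]
  ring

lemma constantCoeff_eulerProd {d : ℕ} (hd : 0 < d) (z : ℂ) :
    constantCoeff (eulerProd d z) = 1 := by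
  have h := (multipliable_eulerProd hd z).map_tprod constantCoeff
    (WithPiTopology.continuous_constantCoeff ℂ)
  rw [eulerProd, h]
  simp [hd.ne']

lemma eulerProd_ne_zero {d : ℕ} (hd : 0 < d) (z : ℂ) : eulerProd d z ≠ 0 := fun h ↦ by
  simpa [h] using constantCoeff_eulerProd hd z

lemma winquistConst_eq : winquistConst = eulerProd 1 1 ^ 2 := by
  obtain ⟨ω, hω⟩ : ∃ ω : ℂ, IsPrimitiveRoot ω 3 :=
    ⟨_, Complex.isPrimitiveRoot_exp 3 (by norm_num)⟩
  have h0 : ω ≠ 0 := hω.ne_zero (by norm_num)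
  have h3 : ω ^ 3 = 1 := hω.pow_eq_one
  have h1 : 1 - ω ≠ 0 := sub_ne_zero.mpr (hω.ne_one (by norm_num)).symm
  have hs : ω ^ 2 + ω + 1 = 0 := by
    have : (1 - ω) * (ω ^ 2 + ω + 1) = 0 := by linear_combination -h3
    simpa [h1] using this
  have e1 := prod_eulerProd_mul_pow (t := 3) (by norm_num) hω 1
  have e2 := prod_eulerProd_mul_pow (t := 3) (by norm_num) hω (-1)
  have hi : ω⁻¹ = ω ^ 2 := inv_eq_of_mul_eq_one_right (by linear_combination h3)
  have key := theta_mul_theta_mul_theta_mul_theta (a := -1) (b := ω) (by norm_num) h0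
  simp only [Finset.prod_range_succ, Finset.prod_range_zero, pow_zero, pow_one, one_mul, mul_one,
    one_pow] at e1 e2
  rw [h3, theta_one three_pos, mul_zero, mul_zero, sub_zero, quintuple_of_pow_three h3,
    theta_eq_eulerProd one_pos h0, theta_eq_eulerProd one_pos (by simp),
    theta_eq_eulerProd one_pos (mul_ne_zero (by simp) h0),
    theta_eq_eulerProd one_pos (div_ne_zero (by simp) h0), theta_eq_eulerProd three_pos (by simp),
    show (-1 : ℂ)⁻¹ = -1 by norm_num, show (-1 * ω)⁻¹ = ω ^ 2 * -1 by rw [mul_inv, hi]; norm_num,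
    show -1 / ω = ω ^ 2 * -1 by rw [div_eq_mul_inv, hi]; ring, hi,
    show (ω ^ 2 * -1)⁻¹ = ω * -1 by rw [mul_inv, ← hi]; norm_num, mul_comm (-1) ω,
    show ((-1 : ℂ) ^ 3)⁻¹ = (-1) ^ 3 by norm_num, ← e2, ← e1] at key
  have hc : (C (1 - ω * -1) * C (1 - ω ^ 2 * -1) : ℂ⟦X⟧) = 1 := by
    rw [← map_mul, ← map_one C]
    congr 1
    linear_combination h3 + hs
  have hC : (C (1 - ω) : ℂ⟦X⟧) ≠ 0 := (map_ne_zero_iff _ C_injective).mpr h1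
  have hC2 : (C (1 - -1 : ℂ) : ℂ⟦X⟧) ≠ 0 :=
    (map_ne_zero_iff _ C_injective).mpr (by norm_num)
  rw [show (1 - (-1) ^ 3 : ℂ) = 1 - -1 by norm_num] at key
  have hne := fun z ↦ eulerProd_ne_zero one_pos z
  set K : ℂ⟦X⟧ := C (1 - ω) * C (1 - -1 : ℂ) * (eulerProd 1 1) ^ 2 * eulerProd 1 ω *
    eulerProd 1 (ω ^ 2) *
      (eulerProd 1 (-1) * eulerProd 1 (ω * -1) * eulerProd 1 (ω ^ 2 * -1)) ^ 2 with hK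
  have hK0 : K ≠ 0 := by
    simp only [hK, ne_eq, mul_eq_zero, pow_eq_zero_iff two_ne_zero, hC, hC2, hne, or_self,
      not_false_eq_true]
  refine mul_left_cancel₀ hK0 ?_
  linear_combination K * eulerProd 1 1 ^ 2 * hc - key

lemma tri_one_sub (k : ℤ) : tri (1 - k) = tri k := by
  have h1 := two_mul_tri (1 - k)
  have h2 := two_mul_tri k
  zify
  linarith

/-- The involution `k ↦ 1 - k` cancels the coefficients of `theta d z * G` along a residue class. -/
lemma coeff_theta_mul_qSeries_eq_zero {ι : Type*} {d t m : ℕ} (hd : 0 < d) {z : ℂ} (hz0 : z ≠ 0)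
    (hz : z ^ t = 1) {g : ι → ℕ} (hg : LocFin g) (c : ι → ℂ)
    (h : ∀ k i, (d * tri k + g i) % t = m % t → (t : ℤ) ∣ 2 * k - 1) :
    coeff m (theta d z * qSeries g c) = 0 := by
  rw [theta, (locFin_tri hd).mul hg, ((locFin_tri hd).prod hg).coeff_qSeries,
    ← self_eq_neg, ← tsum_neg,
    ← ((Equiv.subLeft (1 : ℤ)).prodCongr (Equiv.refl ι)).tsum_eq]
  refine tsum_congr fun ⟨k, i⟩ ↦ ?_
  simp only [Equiv.prodCongr_apply, Prod.map, Equiv.subLeft_apply, Equiv.refl_apply, tri_one_sub]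
  split_ifs with hm
  · obtain ⟨s, hs⟩ := h k i (by rw [hm])
    have h1 : (-z) ^ (2 * k - 1) = -1 := by
      rw [neg_zpow_eq, Odd.neg_one_zpow ⟨k - 1, by ring⟩, hs, zpow_mul, zpow_natCast, hz, one_zpow,
        mul_one]
    have h2 : (-z) ^ k = -(-z) ^ (1 - k) := by
      rw [show k = (2 * k - 1) + (1 - k) by ring, zpow_add₀ (neg_ne_zero.mpr hz0), h1]
      ring_nf
    rw [h2]
    ring
  · simp

lemma coeff_eulerProd_eq_zero {t m : ℕ} (ht : 0 < t) (z : ℂ) (hm : ¬ t ∣ m) :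
    coeff m (eulerProd t z) = 0 := by
  have key : ∀ N : ℕ, ∀ m, ¬ t ∣ m →
      coeff m (∏ n ∈ Finset.range N, (1 - C z * X ^ (t * (n + 1)) : ℂ⟦X⟧)) = 0 := by
    intro N
    induction N with
    | zero =>
      intro m hm
      rw [Finset.prod_range_zero, coeff_one, if_neg]
      rintro rfl
      simp at hm
    | succ N ih =>
      intro m hm
      rw [Finset.prod_range_succ, mul_sub, mul_one, map_sub, ih m hm, ← mul_assoc, coeff_mul_X_pow',
        zero_sub, neg_eq_zero, ite_eq_right_iff]
      intro hle
      rw [coeff_mul_C, ih _ fun hd ↦ hm ?_, zero_mul]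
      have := dvd_add hd (dvd_mul_right t (N + 1))
      rwa [Nat.sub_add_cancel hle] at this
  have h := (WithPiTopology.tendsto_iff_coeff_tendsto ..).mp
    (multipliable_eulerProd ht z).hasProd.tendsto_prod_nat m
  refine tendsto_nhds_unique h ?_
  simp only [key _ m hm]
  exact tendsto_const_nhds

lemma coeff_eq_zero_of_mul {t m : ℕ} {F H : ℂ⟦X⟧} (h0 : constantCoeff H = 1)
    (hH : ∀ m, ¬ t ∣ m → coeff m H = 0) (h : ∀ i, i % t = m % t → coeff i (F * H) = 0) :
    coeff m F = 0 := by
  induction m using Nat.strong_induction_on with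
  | _ m ih =>
    have h1 := h m rfl
    rw [coeff_mul, Finset.sum_eq_single (m, 0)] at h1
    · simpa [h0] using h1
    · rintro ⟨i, j⟩ hij hne
      rw [Finset.HasAntidiagonal.mem_antidiagonal] at hij
      simp only at hij ⊢
      by_cases hj : t ∣ j
      · have him : i % t = m % t := by
          obtain ⟨s, rfl⟩ := hj
          rw [← hij, Nat.add_mul_mod_self_left]
        rw [ih i ?_ fun i' hi' ↦ h i' (hi'.trans him), zero_mul]
        rcases Nat.eq_zero_or_pos j with rfl | hj
        · exact absurd (by simp_all) hne
        · omega
      · rw [hH j hj, mul_zero]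
    · simp

lemma dvd_two_mul_sub_one {t d r : ℕ} {g : ℤ → ℕ} {Q : ZMod t → ZMod t}
    (hQ : ∀ l : ℤ, 2 * (g l : ZMod t) = Q l)
    (h : ∀ x y : ZMod t, d * (x * (x - 1)) + Q y = 2 * r → 2 * x - 1 = 0) (k l : ℤ)
    (hm : (d * tri k + g l) % t = r % t) : (t : ℤ) ∣ 2 * k - 1 := by
  rw [← ZMod.intCast_zmod_eq_zero_iff_dvd]
  push_cast
  refine h k l ?_
  have h1 := congrArg (Int.cast : ℤ → ZMod t) (two_mul_tri k)
  have h2 := (ZMod.natCast_eq_natCast_iff' _ _ t).mpr hm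
  push_cast at h1 h2
  rw [← hQ, ← h1, ← h2]
  ring

lemma two_mul_cast_pentagonal {t : ℕ} (l : ℤ) :
    2 * (pentagonal l : ZMod t) = (l : ZMod t) * (3 * l - 1) := by
  exact_mod_cast congrArg (Int.cast : ℤ → ZMod t) (two_mul_natCast_pentagonal l)

lemma two_mul_cast_pentagonal_neg {t : ℕ} (l : ℤ) :
    2 * (pentagonal (-l) : ZMod t) = (l : ZMod t) * (3 * l + 1) := by
  rw [two_mul_cast_pentagonal]
  push_cast
  ring

/-- The generating function of all partitions, `z` marking the number of parts. -/
noncomputable def partGF (z : ℂ) : ℂ⟦X⟧ := Nat.Partition.genFun fun _ c ↦ z ^ c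

lemma eulerProd_mul_partGF (z : ℂ) : eulerProd 1 z * partGF z = 1 := by
  rw [partGF, Nat.Partition.genFun_eq_tprod, eulerProd,
    ← (multipliable_eulerProd one_pos z).tprod_mul
      (Nat.Partition.multipliable_genFun fun _ c ↦ z ^ c)]
  convert tprod_one with n
  have h0 : constantCoeff (C z * X ^ (n + 1) : ℂ⟦X⟧) = 0 := by simp
  have h := WithPiTopology.tsum_pow_mul_one_sub_of_constantCoeff_eq_zero h0
  have hs := WithPiTopology.summable_pow_of_constantCoeff_eq_zero h0
  rw [hs.tsum_eq_zero_add, pow_zero, mul_comm] at h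
  rw [one_mul, ← h]
  congr! 4 with j
  rw [mul_pow, ← pow_mul, ← map_pow, smul_eq_C_mul]

/-- The generating function of vector partitions, `z` marking the crank. -/
noncomputable def crankGF (z : ℂ) : ℂ⟦X⟧ := eulerProd 1 1 * (partGF z * partGF z⁻¹)

lemma coeff_eq_zero_of_C_mul_eq {s : ℂ} (hs : s ≠ 0) {A B : ℂ⟦X⟧} (h : C s * A = B) {m : ℕ}
    (hB : coeff m B = 0) : coeff m A = 0 := by
  rw [← h, coeff_C_mul] at hB
  exact (mul_eq_zero.mp hB).resolve_left hs

lemma coeff_crankGF_eq_zero_of_eulerProd {t m : ℕ} (ht : 0 < t) {z : ℂ}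
    (h : ∀ i, i % t = m % t → coeff i (crankGF z * eulerProd t 1) = 0) :
    coeff m (crankGF z) = 0 :=
  coeff_eq_zero_of_mul (constantCoeff_eulerProd ht 1) (fun _ ↦ coeff_eulerProd_eq_zero ht 1) h

section
variable {ζ : ℂ} {t : ℕ}

lemma inv_pow_eq_pow {k l : ℕ} (hζ : ζ ^ t = 1) (h : k + l = t) : (ζ ^ k)⁻¹ = ζ ^ l :=
  inv_eq_of_mul_eq_one_right (by rw [← pow_add, h, hζ])

lemma one_sub_pow_ne_zero {k : ℕ} (hζ : IsPrimitiveRoot ζ t) (h0 : k ≠ 0) (hk : k < t) :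
    1 - ζ ^ k ≠ 0 :=
  sub_ne_zero.mpr (hζ.pow_ne_one_of_pos_of_lt h0 hk).symm

lemma theta_pow {k l : ℕ} (hζ : IsPrimitiveRoot ζ t) (h : k + l = t) (hk : k ≠ 0) :
    theta 1 (ζ ^ k) =
      C (1 - ζ ^ k) * (eulerProd 1 1 * eulerProd 1 (ζ ^ k) * eulerProd 1 (ζ ^ l)) := by
  rw [theta_eq_eulerProd one_pos (pow_ne_zero _ (hζ.ne_zero (by omega))),
    inv_pow_eq_pow hζ.pow_eq_one h]

/-- Clearing denominators: only the interior roots of unity survive. -/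
lemma crankGF_mul_eulerProd {m : ℕ} (hζ : IsPrimitiveRoot ζ (m + 3)) :
    crankGF ζ * eulerProd (m + 3) 1 =
      eulerProd 1 1 ^ 2 * ∏ k ∈ Finset.range m, eulerProd 1 (ζ ^ (k + 2)) := by
  have h := prod_eulerProd_mul_pow (by omega) hζ 1
  simp only [mul_one, one_pow] at h
  have hi : ζ⁻¹ = ζ ^ (m + 2) := by
    simpa using inv_pow_eq_pow (k := 1) (l := m + 2) hζ.pow_eq_one (by omega)
  have h1 := eulerProd_mul_partGF ζ
  have h2 := eulerProd_mul_partGF ζ⁻¹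
  rw [← h, Finset.prod_range_succ, Finset.prod_range_succ', Finset.prod_range_succ', crankGF]
  simp only [zero_add, pow_one, pow_zero, add_assoc, Nat.reduceAdd]
  rw [← hi]
  set R := ∏ k ∈ Finset.range m, eulerProd 1 (ζ ^ (k + 2))
  linear_combination eulerProd 1 1 ^ 2 * R * h1 * (eulerProd 1 ζ⁻¹ * partGF ζ⁻¹) +
    eulerProd 1 1 ^ 2 * R * h2
end

lemma coeff_crankGF_five {ζ : ℂ} (hζ : IsPrimitiveRoot ζ 5) {m : ℕ} (hm : m % 5 = 4) :
    coeff m (crankGF ζ) = 0 := by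
  refine coeff_crankGF_eq_zero_of_eulerProd (by norm_num : 0 < 5) fun i hi ↦ ?_
  have h0 : ζ ≠ 0 := hζ.ne_zero (by norm_num)
  refine coeff_eq_zero_of_C_mul_eq (one_sub_pow_ne_zero (k := 2) hζ (by norm_num) (by norm_num))
    (B := theta 1 (ζ ^ 2) * qSeries pentagonal (fun k ↦ (-1) ^ k)) ?_ ?_
  · rw [crankGF_mul_eulerProd hζ, theta_pow (l := 3) hζ (by norm_num) (by norm_num),
      qSeries_pentagonal]
    simp only [Finset.prod_range_succ, Finset.prod_range_zero, Nat.reduceAdd]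
    ring
  · refine coeff_theta_mul_qSeries_eq_zero (t := 5) one_pos (pow_ne_zero _ h0)
      (by rw [← pow_mul, mul_comm, pow_mul, hζ.pow_eq_one, one_pow]) locFin_pentagonal _ fun k l h ↦
      dvd_two_mul_sub_one (d := 1) (r := 4) (Q := fun y ↦ y * (3 * y - 1)) two_mul_cast_pentagonal
        (by decide) k l ?_
    omega

lemma coeff_crankGF_seven {ζ : ℂ} (hζ : IsPrimitiveRoot ζ 7) {m : ℕ} (hm : m % 7 = 5) :
    coeff m (crankGF ζ) = 0 := by
  refine coeff_crankGF_eq_zero_of_eulerProd (by norm_num : 0 < 7) fun i hi ↦ ?_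
  have h0 : ζ ≠ 0 := hζ.ne_zero (by norm_num)
  refine coeff_eq_zero_of_C_mul_eq (s := (1 - ζ ^ 2) * (1 - ζ ^ 3))
    (mul_ne_zero (one_sub_pow_ne_zero hζ (by norm_num) (by norm_num))
      (one_sub_pow_ne_zero hζ (by norm_num) (by norm_num)))
    (B := theta 1 (ζ ^ 2) * theta 1 (ζ ^ 3)) ?_ ?_
  · rw [crankGF_mul_eulerProd hζ, theta_pow (l := 5) hζ (by norm_num) (by norm_num),
      theta_pow (l := 4) hζ (by norm_num) (by norm_num), map_mul]
    simp only [Finset.prod_range_succ, Finset.prod_range_zero, Nat.reduceAdd]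
    ring
  · refine coeff_theta_mul_qSeries_eq_zero (t := 7) one_pos (pow_ne_zero _ h0)
      (by rw [← pow_mul, mul_comm, pow_mul, hζ.pow_eq_one, one_pow]) (locFin_tri one_pos) _
      fun k l h ↦ dvd_two_mul_sub_one (d := 1) (r := 5)
        (g := fun l ↦ 1 * tri l) (Q := fun l ↦ l * (l - 1)) (fun l ↦ ?_) (by decide) k l ?_
    · have := congrArg (Int.cast : ℤ → ZMod 7) (two_mul_tri l)
      push_cast at this ⊢
      rw [one_mul, this]
    · omega

lemma coeff_theta_mul_quintuple {z : ℂ} (hz : z ^ 11 = 1) (b : ℂ) {m : ℕ} (hm : m % 11 = 6) :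
    coeff m (theta 3 z * quintuple b) = 0 := by
  have h0 : z ≠ 0 := by
    rintro rfl
    simp at hz
  have h1 : ∀ c, coeff m (theta 3 z * qSeries pentagonal c) = 0 := fun c ↦
    coeff_theta_mul_qSeries_eq_zero (t := 11) three_pos h0 hz locFin_pentagonal _ fun k l h ↦
      dvd_two_mul_sub_one (d := 3) (r := 6) (Q := fun y ↦ y * (3 * y - 1))
        two_mul_cast_pentagonal (by decide) k l (by omega)
  have h2 : ∀ c, coeff m (theta 3 z * qSeries (fun k ↦ pentagonal (-k)) c) = 0 := fun c ↦
    coeff_theta_mul_qSeries_eq_zero (t := 11) three_pos h0 hz locFin_pentagonal_neg _ fun k l h ↦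
      dvd_two_mul_sub_one (d := 3) (r := 6) (Q := fun y ↦ y * (3 * y + 1))
        two_mul_cast_pentagonal_neg (by decide) k l (by omega)
  rw [quintuple, mul_sub, map_sub, h1, mul_left_comm, coeff_C_mul, h2, mul_zero, sub_zero]

lemma coeff_crankGF_eleven {ζ : ℂ} (hζ : IsPrimitiveRoot ζ 11) {m : ℕ} (hm : m % 11 = 6) :
    coeff m (crankGF ζ) = 0 := by
  refine coeff_crankGF_eq_zero_of_eulerProd (by norm_num : 0 < 11) fun i hi ↦ ?_
  rw [hm] at hi
  have h0 : ζ ≠ 0 := hζ.ne_zero (by norm_num)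
  have hd : ζ ^ 2 / ζ ^ 5 = ζ ^ 8 := by
    rw [div_eq_mul_inv, inv_pow_eq_pow (l := 6) hζ.pow_eq_one (by norm_num), ← pow_add]
  have hone : ∀ k, ((ζ ^ k) ^ 3) ^ 11 = 1 := fun k ↦ by
    rw [← pow_mul, ← pow_mul, mul_comm k, mul_comm 3, mul_assoc, pow_mul, hζ.pow_eq_one, one_pow]
  refine coeff_eq_zero_of_C_mul_eq
    (s := (1 - ζ ^ 2) * (1 - ζ ^ 5) * ((1 - ζ ^ 7) * (1 - ζ ^ 8)))
    (B := theta 3 ((ζ ^ 2) ^ 3) * quintuple (ζ ^ 5) -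
      C (ζ ^ 8) * (quintuple (ζ ^ 2) * theta 3 ((ζ ^ 5) ^ 3))) ?_ ?_ ?_
  · refine mul_ne_zero (mul_ne_zero ?_ ?_) (mul_ne_zero ?_ ?_) <;>
    exact one_sub_pow_ne_zero hζ (by norm_num) (by norm_num)
  · have key := theta_mul_theta_mul_theta_mul_theta (pow_ne_zero 2 h0) (pow_ne_zero 5 h0)
    rw [hd, ← pow_add, show 2 + 5 = 7 from rfl, winquistConst_eq,
      theta_pow (k := 2) (l := 9) hζ (by norm_num) (by norm_num),
      theta_pow (k := 5) (l := 6) hζ (by norm_num) (by norm_num),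
      theta_pow (k := 7) (l := 4) hζ (by norm_num) (by norm_num),
      theta_pow (k := 8) (l := 3) hζ (by norm_num) (by norm_num)] at key
    refine mul_left_cancel₀ (pow_ne_zero 2 (eulerProd_ne_zero one_pos 1)) ?_
    rw [← key, crankGF_mul_eulerProd (m := 8) hζ]
    simp only [Finset.prod_range_succ, Finset.prod_range_zero, Nat.reduceAdd, map_mul]
    ring
  · rw [map_sub, coeff_C_mul, mul_comm (quintuple _),
      coeff_theta_mul_quintuple (hone _) _ hi,
      coeff_theta_mul_quintuple (hone _) _ hi, mul_zero, sub_zero]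

/-- Multisets of positive integers, that is, partitions of arbitrary size. -/
abbrev PosMultiset := {s : Multiset ℕ // ∀ i ∈ s, 0 < i}

/-- The size of a partition. -/
def PosMultiset.size (s : PosMultiset) : ℕ := s.1.sum

/-- A partition of `n` as a multiset of positive integers. -/
def Nat.Partition.toPosMultiset {n : ℕ} (p : n.Partition) : PosMultiset :=
  ⟨p.parts, fun _ ↦ p.parts_pos⟩

lemma Nat.Partition.toPosMultiset_injective (n : ℕ) :
    Function.Injective (toPosMultiset (n := n)) :=
  fun _ _ h ↦ Nat.Partition.ext (congrArg Subtype.val h)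

lemma PosMultiset.exists_toPosMultiset_eq {n : ℕ} (s : PosMultiset) (hs : n = s.size) :
    s ∈ Set.range (Nat.Partition.toPosMultiset (n := n)) :=
  ⟨⟨s.1, fun {i} ↦ s.2 i, hs.symm⟩, rfl⟩

lemma locFin_size : LocFin PosMultiset.size := fun n ↦ by
  refine ((Set.finite_Iic n).biUnion fun m _ ↦
    Set.finite_range (Nat.Partition.toPosMultiset (n := m))).subset fun s hs ↦ ?_
  simp only [Set.mem_iUnion]
  exact ⟨s.size, hs, s.exists_toPosMultiset_eq rfl⟩

lemma genFun_eq_qSeries (f : ℕ → ℕ → ℂ) :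
    Nat.Partition.genFun f = qSeries PosMultiset.size fun s ↦ s.1.toFinsupp.prod f := by
  ext n
  rw [locFin_size.coeff_qSeries, Nat.Partition.coeff_genFun,
    ← (Nat.Partition.toPosMultiset_injective n).tsum_eq, tsum_fintype]
  · refine Finset.sum_congr rfl fun p _ ↦ ?_
    rw [if_pos (show n = p.toPosMultiset.size from p.parts_sum.symm), Nat.Partition.toPosMultiset]
  · intro s hs
    refine s.exists_toPosMultiset_eq ?_
    by_contra h
    exact hs (if_neg h)

lemma partGF_eq_qSeries (z : ℂ) :
    partGF z = qSeries PosMultiset.size fun s ↦ z ^ s.1.card := by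
  rw [partGF, genFun_eq_qSeries]
  congr! 2 with s
  rw [Finsupp.prod, Finset.prod_pow_eq_pow_sum]
  simp

lemma toFinsupp_prod_ite (s : Multiset ℕ) :
    s.toFinsupp.prod (fun _ c ↦ if c = 1 then (-1 : ℂ) else 0) =
      if s.Nodup then (-1) ^ s.card else 0 := by
  rw [Finsupp.prod]
  simp only [Multiset.toFinsupp_support, Multiset.toFinsupp_apply]
  split_ifs with h
  · rw [Finset.prod_congr rfl (g := fun _ ↦ -1), Finset.prod_const,
      Multiset.toFinset_card_of_nodup h]
    intro i hi
    exact if_pos (Multiset.count_eq_one_of_mem h (Multiset.mem_toFinset.mp hi))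
  · rw [Multiset.nodup_iff_count_le_one] at h
    push Not at h
    obtain ⟨i, hi⟩ := h
    refine Finset.prod_eq_zero (i := i) ?_ (if_neg (by omega))
    rw [Multiset.mem_toFinset, ← Multiset.count_pos]
    omega

lemma eulerProd_one_one_eq_qSeries : eulerProd 1 1 =
    qSeries PosMultiset.size fun s ↦ if s.1.Nodup then (-1) ^ s.1.card else 0 := by
  simp_rw [← toFinsupp_prod_ite]
  rw [← genFun_eq_qSeries, Nat.Partition.genFun_eq_tprod, eulerProd]
  congr! 2 with n
  rw [tsum_eq_single 0]
  · simp [sub_eq_add_neg]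
  · intro j hj
    simp [hj]

/-- The multisets underlying a triple of partitions. -/
def PosMultiset.triple (x : PosMultiset × PosMultiset × PosMultiset) :
    Multiset ℕ × Multiset ℕ × Multiset ℕ := (x.1.1, x.2.1.1, x.2.2.1)

lemma PosMultiset.triple_injective : Function.Injective triple := by
  rintro ⟨a, b, c⟩ ⟨a', b', c'⟩ h
  simpa [triple, Subtype.ext_iff] using h

lemma finite_triple (n : ℕ) : {x : PosMultiset × PosMultiset × PosMultiset |
    n = x.1.size + (x.2.1.size + x.2.2.size)}.Finite :=
  (locFin_size.prod (locFin_size.prod locFin_size) n).subset fun _ h ↦ (Eq.symm h).le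

/-- The triples of partitions of total size `n`. -/
noncomputable def triples (n : ℕ) : Finset (PosMultiset × PosMultiset × PosMultiset) :=
  (finite_triple n).toFinset

lemma mem_triples {n : ℕ} {x : PosMultiset × PosMultiset × PosMultiset} :
    x ∈ triples n ↔ n = x.1.size + (x.2.1.size + x.2.2.size) := by
  simp [triples]

/-- The weight of a vector partition, extended by zero to all triples of partitions. -/
def vweight (x : PosMultiset × PosMultiset × PosMultiset) : ℂ :=
  if x.1.1.Nodup then (-1) ^ x.1.1.card else 0

lemma coeff_crankGF {z : ℂ} (hz : z ≠ 0) (n : ℕ) :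
    coeff n (crankGF z) = ∑ x ∈ triples n, vweight x * z ^ vcrank (PosMultiset.triple x) := by
  rw [crankGF, eulerProd_one_one_eq_qSeries, partGF_eq_qSeries, partGF_eq_qSeries,
    locFin_size.mul locFin_size, locFin_size.mul (locFin_size.prod locFin_size),
    (locFin_size.prod (locFin_size.prod locFin_size)).coeff_qSeries,
    tsum_eq_sum (s := triples n) fun x hx ↦ if_neg (mt mem_triples.mpr hx)]
  refine Finset.sum_congr rfl fun x hx ↦ ?_
  rw [if_pos (mem_triples.mp hx), vweight, vcrank, PosMultiset.triple, zpow_sub₀ hz, zpow_natCast,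
    zpow_natCast, inv_pow, div_eq_mul_inv]

lemma natCard_vectorPartition (n : ℕ) (Q : Multiset ℕ × Multiset ℕ × Multiset ℕ → Prop)
    [DecidablePred Q] :
    Nat.card {x : Multiset ℕ × Multiset ℕ × Multiset ℕ //
      IsVectorPartition x ∧ x.1.sum + x.2.1.sum + x.2.2.sum = n ∧ Q x} =
    ((triples n).filter fun x ↦ x.1.1.Nodup ∧ Q (PosMultiset.triple x)).card := by
  rw [← Finset.card_map ⟨_, PosMultiset.triple_injective⟩]
  refine Nat.subtype_card _ fun x ↦ ?_
  simp only [Finset.mem_map, Finset.mem_filter, mem_triples, Function.Embedding.coeFn_mk]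
  constructor
  · rintro ⟨y, ⟨h1, h2, h3⟩, rfl⟩
    refine ⟨⟨h2, y.1.2, y.2.1.2, y.2.2.2⟩, ?_, h3⟩
    rw [h1, ← add_assoc]
    rfl
  · rintro ⟨⟨h1, h2, h3, h4⟩, h5, h6⟩
    refine ⟨(⟨x.1, h2⟩, ⟨x.2.1, h3⟩, ⟨x.2.2, h4⟩), ⟨?_, h1, h6⟩, rfl⟩
    rw [← h5, add_assoc]
    rfl

open Classical in
lemma cast_NV (k t : ℤ) (n : ℕ) : (NV k t n : ℂ) = ∑ x ∈ triples n,
    if vcrank (PosMultiset.triple x) ≡ k [ZMOD t] then vweight x else 0 := by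
  rw [NV, natCard_vectorPartition n fun x ↦ vcrank x ≡ k [ZMOD t] ∧ Even (Multiset.card x.1),
    natCard_vectorPartition n fun x ↦ vcrank x ≡ k [ZMOD t] ∧ ¬ Even (Multiset.card x.1)]
  push_cast
  rw [Finset.natCast_card_filter, Finset.natCast_card_filter, ← Finset.sum_sub_distrib]
  refine Finset.sum_congr rfl fun x _ ↦ ?_
  rw [show (PosMultiset.triple x).1 = x.1.1 from rfl, vweight]
  by_cases h1 : x.1.1.Nodup <;> by_cases h2 : vcrank (PosMultiset.triple x) ≡ k [ZMOD t] <;>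
    rcases Nat.even_or_odd x.1.1.card with h3 | h3
  all_goals simp [h1, h2, h3, h3.neg_one_pow, ← Nat.not_odd_iff_even]

lemma sum_zpow_pow {t : ℕ} {ζ : ℂ} (hζ : IsPrimitiveRoot ζ t) (c k : ℤ) :
    ∑ j ∈ Finset.range t, (ζ ^ (c - k)) ^ j = if c ≡ k [ZMOD t] then (t : ℂ) else 0 := by
  have h : c ≡ k [ZMOD t] ↔ ζ ^ (c - k) = 1 := by
    rw [hζ.zpow_eq_one_iff_dvd, Int.modEq_comm, Int.modEq_iff_dvd]
  split_ifs with hc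
  · simp [h.mp hc]
  · rw [geom_sum_eq (mt h.mpr hc), ← zpow_natCast, ← zpow_mul, mul_comm, zpow_mul, zpow_natCast,
      hζ.pow_eq_one, one_zpow, sub_self, zero_div]

lemma coeff_crankGF_one (n : ℕ) : coeff n (crankGF 1) = Nat.card n.Partition := by
  rw [crankGF, inv_one, ← mul_assoc, eulerProd_mul_partGF, one_mul, partGF,
    Nat.Partition.coeff_genFun]
  simp [Finsupp.prod]

lemma NV_eq_of_coeff_crankGF {t n : ℕ} (ht : t.Prime)
    (h : ∀ ζ : ℂ, IsPrimitiveRoot ζ t → coeff n (crankGF ζ) = 0) (k : ℤ) :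
    (NV k t n : ℚ) = (Nat.card n.Partition : ℚ) / t := by
  have ht0 : (t : ℚ) ≠ 0 := by exact_mod_cast ht.ne_zero
  rw [eq_div_iff ht0]
  suffices (NV k t n : ℂ) * t = Nat.card n.Partition by exact_mod_cast this
  have hζ := Complex.isPrimitiveRoot_exp t ht.ne_zero
  set ζ := Complex.exp (2 * Real.pi * Complex.I / t)
  have hζ0 : ζ ≠ 0 := hζ.ne_zero ht.ne_zero
  calc (NV k t n : ℂ) * t
      = ∑ x ∈ triples n, vweight x *
          ∑ j ∈ Finset.range t, (ζ ^ (vcrank (PosMultiset.triple x) - k)) ^ j := by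
        rw [cast_NV, Finset.sum_mul]
        refine Finset.sum_congr rfl fun x _ ↦ ?_
        rw [sum_zpow_pow hζ, ite_mul, mul_ite, zero_mul, mul_zero]
    _ = ∑ j ∈ Finset.range t, (ζ ^ j) ^ (-k) * coeff n (crankGF (ζ ^ j)) := by
        simp only [coeff_crankGF (pow_ne_zero _ hζ0), Finset.mul_sum]
        rw [Finset.sum_comm]
        refine Finset.sum_congr rfl fun j _ ↦ Finset.sum_congr rfl fun x _ ↦ ?_
        rw [mul_left_comm, ← zpow_add₀ (pow_ne_zero _ hζ0), ← zpow_natCast, ← zpow_natCast,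
          ← zpow_mul, ← zpow_mul]
        ring_nf
    _ = Nat.card n.Partition := by
        rw [Finset.sum_eq_single_of_mem 0 (Finset.mem_range.mpr ht.pos)]
        · rw [pow_zero, one_zpow, one_mul, coeff_crankGF_one]
        · intro j hj h0
          rw [h _ (hζ.pow_of_coprime j ?_), mul_zero]
          exact (Nat.coprime_of_lt_prime h0 (Finset.mem_range.mp hj) ht).symm

/-- Garvan's theorem: the vector crank witnesses all three Ramanujan congruences:
`N_V(k,5,5n+4) = p(5n+4)/5`, `N_V(k,7,7n+5) = p(7n+5)/7`, and
`N_V(k,11,11n+6) = p(11n+6)/11`. -/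
theorem garvan_vector_crank (n : ℕ) :
    (∀ k : ℤ, 0 ≤ k → k ≤ 4 →
      (NV k 5 (5 * n + 4) : ℚ) = (Nat.card (Nat.Partition (5 * n + 4)) : ℚ) / 5) ∧
    (∀ k : ℤ, 0 ≤ k → k ≤ 6 →
      (NV k 7 (7 * n + 5) : ℚ) = (Nat.card (Nat.Partition (7 * n + 5)) : ℚ) / 7) ∧
    (∀ k : ℤ, 0 ≤ k → k ≤ 10 →
      (NV k 11 (11 * n + 6) : ℚ) = (Nat.card (Nat.Partition (11 * n + 6)) : ℚ) / 11) := by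
  exact ⟨fun k _ _ ↦ NV_eq_of_coeff_crankGF (t := 5) (by norm_num)
      (fun _ hζ ↦ coeff_crankGF_five hζ (by omega)) k,
    fun k _ _ ↦ NV_eq_of_coeff_crankGF (t := 7) (by norm_num)
      (fun _ hζ ↦ coeff_crankGF_seven hζ (by omega)) k,
    fun k _ _ ↦ NV_eq_of_coeff_crankGF (t := 11) (by norm_num)
      (fun _ hζ ↦ coeff_crankGF_eleven hζ (by omega)) k⟩
end

section
/- For every nonnegative integer n: M(k,5,5n+4) = p(5n+4)/5 for 0 ≤ k ≤ 4; M(k,7,7n+5) = p(7n+5)/7 for 0 ≤ k ≤ 6; and M(k,11,11n+6) = p(11n+6)/11 for 0 ≤ k ≤ 10. -/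
/-- The Andrews–Garvan crank of a partition: with `λ(π)` the largest part, `μ(π)` the
number of ones, and `ν(π)` the number of parts larger than `μ(π)`, the crank is `λ(π)`
if `μ(π) = 0` and `ν(π) − μ(π)` otherwise. -/
def Nat.Partition.crank {n : ℕ} (π : Nat.Partition n) : ℤ :=
  if π.parts.count 1 = 0 then (π.parts.sup : ℤ)
  else ((Multiset.card (π.parts.filter fun i => π.parts.count 1 < i)) : ℤ) -
    (π.parts.count 1 : ℤ)

namespace CrankSeries

open PowerSeries Filter Topology
open scoped PowerSeries.WithPiTopology

/-- The product `∏_{i < n} (1 - w Xⁱ⁺¹)`. -/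
noncomputable def qPoch {K : Type*} [Field K] (w : K⟦X⟧) (n : ℕ) : K⟦X⟧ :=
  ∏ i ∈ Finset.range n, (1 - w * X ^ (i + 1))

theorem qPoch_succ {K : Type*} [Field K] (w : K⟦X⟧) (n : ℕ) :
    qPoch w (n + 1) = qPoch w n * (1 - w * X ^ (n + 1)) :=
  Finset.prod_range_succ _ _

theorem constantCoeff_qPoch {K : Type*} [Field K] (w : K⟦X⟧) (n : ℕ) :
    constantCoeff (qPoch w n) = 1 := by
  simp [qPoch, map_prod]

theorem qPoch_mul_inv {K : Type*} [Field K] (w : K⟦X⟧) (n : ℕ) :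
    qPoch w n * (qPoch w n)⁻¹ = 1 :=
  PowerSeries.mul_inv_cancel _ (by simp [constantCoeff_qPoch])

/-- The coefficient `(αX; X)ⱼ / (X; X)ⱼ` of the `q`-binomial series. -/
noncomputable def qBinomialCoeff {K : Type*} [Field K] (α : K⟦X⟧) (j : ℕ) : K⟦X⟧ :=
  qPoch α j * (qPoch 1 j)⁻¹

theorem qBinomialCoeff_succ {K : Type*} [Field K] (α : K⟦X⟧) (j : ℕ) :
    (1 - X ^ (j + 1)) * qBinomialCoeff α (j + 1) = (1 - α * X ^ (j + 1)) * qBinomialCoeff α j := by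
  have h1 := qPoch_mul_inv (1 : K⟦X⟧) (j + 1)
  have h2 := qPoch_mul_inv (1 : K⟦X⟧) j
  rw [qPoch_succ] at h1
  rw [qBinomialCoeff, qBinomialCoeff, qPoch_succ α, qPoch_succ 1]
  generalize (qPoch 1 j * (1 - 1 * X ^ (j + 1)) : K⟦X⟧)⁻¹ = b at *
  generalize (qPoch 1 j : K⟦X⟧)⁻¹ = c at *
  generalize (qPoch 1 j : K⟦X⟧) = d at *
  linear_combination (qPoch α j * (1 - α * X ^ (j + 1))) * (c * h1 - b * (1 - X ^ (j + 1)) * h2)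

section Topology

variable {K : Type*} [Field K] [TopologicalSpace K]

/-- The product `∏ (1 - yᵢ Xⁱ⁺¹)`. -/
noncomputable def qProd (y : ℕ → K⟦X⟧) : K⟦X⟧ := ∏' i, (1 - y i * X ^ (i + 1))

theorem hasProd_qProd (y : ℕ → K⟦X⟧) :
    HasProd (fun i ↦ 1 - y i * X ^ (i + 1)) (qProd y) := by
  refine Multipliable.hasProd ?_
  simp_rw [sub_eq_add_neg]
  apply WithPiTopology.multipliable_one_add_of_tendsto_order_atTop_nhds_top
  refine ENat.tendsto_nhds_top_iff_natCast_lt.mpr fun n ↦ eventually_atTop.mpr ⟨n, fun m hm ↦ ?_⟩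
  rw [order_neg]
  grw [← le_order_mul, order_X_pow]
  refine lt_add_of_nonneg_of_lt (by simp) ?_
  norm_cast
  omega

theorem hasSum_of_forall_eq {ι : Type*} {f g : ι → K⟦X⟧} {a : K⟦X⟧} (hf : HasSum f a)
    (h : ∀ i, g i = f i) : HasSum g a := by
  rwa [funext h]

theorem tendsto_of_eventually_coeff_eq {f : ℕ → K⟦X⟧} {a : K⟦X⟧}
    (h : ∀ d, ∀ᶠ n in atTop, coeff d (f n) = coeff d a) : Tendsto f atTop (𝓝 a) := by
  rw [WithPiTopology.tendsto_iff_coeff_tendsto]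
  exact fun d ↦ tendsto_nhds_of_eventually_eq (h d)

@[simp]
theorem qProd_zero : qProd (fun _ ↦ (0 : K⟦X⟧)) = 1 := by
  simp [qProd]

theorem summable_qBinomial (u : ℕ → K⟦X⟧) (w : K⟦X⟧) : Summable fun j ↦ u j * (X * w) ^ j := by
  refine WithPiTopology.summable_of_tendsto_order_atTop_nhds_top K ?_
  refine ENat.tendsto_nhds_top_iff_natCast_lt.mpr fun n ↦
    eventually_atTop.mpr ⟨n + 1, fun m hm ↦ ?_⟩
  rw [mul_pow, mul_left_comm]
  grw [← le_order_mul, order_X_pow]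
  refine lt_add_of_lt_of_nonneg ?_ (by simp)
  norm_cast

/-- The `q`-binomial series `∑ⱼ (αX; X)ⱼ / (X; X)ⱼ (X w)ʲ`. -/
noncomputable def qBinomialSeries (α w : K⟦X⟧) : K⟦X⟧ :=
  ∑' j, qBinomialCoeff α j * (X * w) ^ j

theorem hasSum_qBinomialSeries (α w : K⟦X⟧) :
    HasSum (fun j ↦ qBinomialCoeff α j * (X * w) ^ j) (qBinomialSeries α w) :=
  (summable_qBinomial _ _).hasSum

variable [DiscreteTopology K]

theorem finite_support_coeff {ι : Type*} {f : ι → K⟦X⟧} (h : Summable f) (d : ℕ) :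
    (Function.support fun i ↦ coeff d (f i)).Finite :=
  ((WithPiTopology.summable_iff_summable_coeff K).1 h d).hasFiniteSupport_of_discreteTopology

/-- Sums of power series over a discrete field are multiplied term by term. -/
theorem hasSum_mul {ι κ : Type*} {f : ι → K⟦X⟧} {g : κ → K⟦X⟧} {a b : K⟦X⟧}
    (hf : HasSum f a) (hg : HasSum g b) :
    HasSum (fun p : ι × κ ↦ f p.1 * g p.2) (a * b) := by
  refine hf.mul hg ?_
  rw [WithPiTopology.summable_iff_summable_coeff]
  intro d
  apply summable_of_hasFiniteSupport
  have hfin : (⋃ x ∈ Finset.HasAntidiagonal.antidiagonal d,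
      (Function.support fun i ↦ coeff x.1 (f i)) ×ˢ
        (Function.support fun i ↦ coeff x.2 (g i))).Finite := by
    refine Set.Finite.biUnion (Finset.finite_toSet _) fun x _ ↦ ?_
    exact (finite_support_coeff hf.summable _).prod (finite_support_coeff hg.summable _)
  refine hfin.subset fun p hp ↦ ?_
  rw [Function.mem_support, coeff_mul] at hp
  obtain ⟨x, hx, hne⟩ := Finset.exists_ne_zero_of_sum_ne_zero hp
  simp only [Set.mem_iUnion]
  exact ⟨x, hx, left_ne_zero_of_mul hne, right_ne_zero_of_mul hne⟩

/-- If an equivalence of the index set negates the `n`-th coefficients, the `n`-th coefficient of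
the sum vanishes. -/
theorem coeff_eq_zero_of_hasSum_of_equiv [CharZero K] {ι : Type*} {f : ι → K⟦X⟧} {a : K⟦X⟧}
    (hf : HasSum f a) (n : ℕ) (σ : ι ≃ ι)
    (hσ : ∀ i, coeff n (f (σ i)) = -coeff n (f i)) : coeff n a = 0 := by
  have h := (WithPiTopology.hasSum_iff_hasSum_coeff K).1 hf n
  have h' : HasSum (fun i ↦ coeff n (f i)) (-coeff n a) := by
    rw [← σ.hasSum_iff]
    simpa [Function.comp_def, hσ] using h.neg
  exact self_eq_neg.1 (h.unique h')

theorem eventually_coeff_eq_of_tendsto {f : ℕ → K⟦X⟧} {a : K⟦X⟧} (h : Tendsto f atTop (𝓝 a))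
    (d : ℕ) : ∀ᶠ n in atTop, coeff d (f n) = coeff d a := by
  have := (WithPiTopology.tendsto_iff_coeff_tendsto K f atTop a).1 h d
  simpa [nhds_discrete] using this

theorem constantCoeff_qProd (y : ℕ → K⟦X⟧) : constantCoeff (qProd y) = 1 := by
  obtain ⟨n, hn⟩ :=
    (eventually_coeff_eq_of_tendsto (hasProd_qProd y).tendsto_prod_nat 0).exists
  rw [← coeff_zero_eq_constantCoeff_apply, ← hn, coeff_zero_eq_constantCoeff_apply, map_prod]
  simp

theorem qProd_ne_zero (y : ℕ → K⟦X⟧) : qProd y ≠ 0 := fun h ↦ by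
  simpa [h] using constantCoeff_qProd y

theorem qProd_eq_prod_mul (y : ℕ → K⟦X⟧) (n : ℕ) :
    qProd y = (∏ i ∈ Finset.range n, (1 - y i * X ^ (i + 1))) *
      qProd (fun i ↦ y (i + n) * X ^ n) := by
  refine (hasProd_qProd y).unique (HasProd.prod_range_mul ?_)
  convert hasProd_qProd (fun i ↦ y (i + n) * X ^ n) using 3 with i
  ring

/-- Changing finitely many factors of the product. -/
theorem qProd_mul_prod_comm {y y' : ℕ → K⟦X⟧} {n : ℕ} (h : ∀ i, n ≤ i → y i = y' i) :
    qProd y * ∏ i ∈ Finset.range n, (1 - y' i * X ^ (i + 1)) =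
      qProd y' * ∏ i ∈ Finset.range n, (1 - y i * X ^ (i + 1)) := by
  rw [qProd_eq_prod_mul y n, qProd_eq_prod_mul y' n]
  have : (fun i ↦ y (i + n) * X ^ n) = fun i ↦ y' (i + n) * X ^ n := by
    funext i
    rw [h _ (by omega)]
  rw [this]
  ring

theorem qBinomialSeries_mul (α w : K⟦X⟧) :
    qBinomialSeries α w * (1 - w * X) =
      (1 - α * X * w * X) * qBinomialSeries α (X * w) := by
  have h := hasSum_qBinomialSeries α w
  have h' := hasSum_qBinomialSeries α (X * w)
  have hl := h.sub h'
  have hr := (h.mul_left (X * w)).sub (h'.mul_left (α * X * w * X))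
  have hl' : HasSum (fun j ↦ qBinomialCoeff α j * (X * w) ^ j -
      qBinomialCoeff α j * (X * (X * w)) ^ j)
      (0 + (X * w * qBinomialSeries α w - α * X * w * X * qBinomialSeries α (X * w))) := by
    have h0 : (fun j ↦ qBinomialCoeff α j * (X * w) ^ j -
        qBinomialCoeff α j * (X * (X * w)) ^ j) 0 = 0 := by simp
    rw [← h0]
    refine HasSum.zero_add (hasSum_of_forall_eq hr fun j ↦ ?_)
    linear_combination (X * w) ^ (j + 1) * qBinomialCoeff_succ α j
  have := hl.unique hl'
  linear_combination this

theorem qBinomialSeries_mul_qPoch (α w : K⟦X⟧) (n : ℕ) :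
    qBinomialSeries α w * qPoch w n =
      qPoch (α * X * w) n * qBinomialSeries α (X ^ n * w) := by
  induction n with
  | zero => simp [qPoch]
  | succ n ih =>
    rw [qPoch_succ, qPoch_succ, ← mul_assoc, ih, pow_succ', mul_assoc X]
    linear_combination qPoch (α * X * w) n * qBinomialSeries_mul α (X ^ n * w)

theorem tendsto_qBinomialSeries (α w : K⟦X⟧) :
    Tendsto (fun n ↦ qBinomialSeries α (X ^ n * w)) atTop (𝓝 1) := by
  refine tendsto_of_eventually_coeff_eq fun d ↦ ?_
  filter_upwards [eventually_ge_atTop d] with n hn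
  have h := (WithPiTopology.hasSum_iff_hasSum_coeff K).1 (hasSum_qBinomialSeries α (X ^ n * w)) d
  have h1 := hasSum_single (f := fun j ↦ coeff d (qBinomialCoeff α j * (X * (X ^ n * w)) ^ j)) 0
    fun j hj ↦ by
      obtain ⟨j, rfl⟩ := Nat.exists_eq_succ_of_ne_zero hj
      have hdvd : X ^ (n + 1) ∣ qBinomialCoeff α (j + 1) * (X * (X ^ n * w)) ^ (j + 1) :=
        ⟨qBinomialCoeff α (j + 1) * (X * (X ^ n * w)) ^ j * w, by ring⟩
      exact X_pow_dvd_iff.1 hdvd d (by omega)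
  rw [h.unique h1]
  simp [qBinomialCoeff, qPoch]

/-- The `q`-binomial theorem. -/
theorem qBinomialSeries_mul_qProd (α w : K⟦X⟧) :
    qBinomialSeries α w * qProd (fun _ ↦ w) = qProd fun _ ↦ α * X * w := by
  have h1 := (hasProd_qProd fun _ ↦ w).tendsto_prod_nat.const_mul (qBinomialSeries α w)
  have h2 := (hasProd_qProd fun _ ↦ α * X * w).tendsto_prod_nat.mul (tendsto_qBinomialSeries α w)
  rw [mul_one] at h2
  refine tendsto_nhds_unique h1 (h2.congr fun n ↦ ?_)
  exact (qBinomialSeries_mul_qPoch α w n).symm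

end Topology

/-- Weight of partitions without ones and with parts at most `k`. -/
def boundedWeight (K : Type*) [Field K] (k i _c : ℕ) : K := if i = 1 ∨ k < i then 0 else 1

/-- The weight `g` of the number of ones times `z` for each part larger than `j`. -/
def tailWeight {K : Type*} [Field K] (z : K) (j : ℕ) (g : ℕ → K) (i c : ℕ) : K :=
  if i = 1 then g c else if j < i then z ^ c else 1

theorem prod_boundedWeight {K : Type*} [Field K] {n : ℕ} (p : n.Partition) (k : ℕ) :
    p.parts.toFinsupp.prod (boundedWeight K k) =
      if p.parts.count 1 = 0 ∧ p.parts.sup ≤ k then 1 else 0 := by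
  rw [Finsupp.prod, Multiset.toFinsupp_support]
  split_ifs with h
  · refine Finset.prod_eq_one fun i hi ↦ if_neg ?_
    rw [Multiset.mem_toFinset] at hi
    rintro (rfl | hk)
    · exact Multiset.count_eq_zero.1 h.1 hi
    · exact absurd ((Multiset.le_sup hi).trans h.2) (by omega)
  · obtain ⟨i, hi, hik⟩ : ∃ i ∈ p.parts, i = 1 ∨ k < i := by
      by_contra! hne
      refine h ⟨Multiset.count_eq_zero.2 fun h1 ↦ (hne 1 h1).1 rfl, ?_⟩
      exact Multiset.sup_le.2 fun i hi ↦ (hne i hi).2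
    exact Finset.prod_eq_zero (Multiset.mem_toFinset.2 hi) (if_pos hik)

theorem prod_tailWeight {K : Type*} [Field K] {n : ℕ} (p : n.Partition) (z : K) {j : ℕ}
    (hj : 1 ≤ j) (g : ℕ → K) :
    p.parts.toFinsupp.prod (tailWeight z j g) =
      (if p.parts.count 1 = 0 then 1 else g (p.parts.count 1)) *
        z ^ Multiset.card (p.parts.filter fun i ↦ j < i) := by
  rw [Finsupp.prod, Multiset.toFinsupp_support]
  simp_rw [Multiset.toFinsupp_apply]
  have hsplit : ∀ i ∈ p.parts.toFinset, tailWeight z j g i (p.parts.count i) =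
      (if i = 1 then g (p.parts.count 1) else 1) *
        z ^ (p.parts.filter fun i ↦ j < i).count i := by
    intro i _
    rw [tailWeight, Multiset.count_filter]
    by_cases h1 : i = 1
    · subst h1
      simp [show ¬ j < 1 by omega]
    · by_cases h2 : j < i <;> simp [h1, h2]
  rw [Finset.prod_congr rfl hsplit, Finset.prod_mul_distrib, Finset.prod_pow_eq_pow_sum,
    Finset.prod_ite_eq' p.parts.toFinset 1]
  congr 1
  · simp only [Multiset.mem_toFinset, ← Multiset.count_ne_zero]
    split_ifs <;> simp_all
  · congr 1
    rw [← Multiset.sum_count_eq_card (s := p.parts.toFinset)]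
    intro i hi
    exact Multiset.mem_toFinset.2 (Multiset.mem_of_mem_filter hi)

theorem zpow_crank_eq {K : Type*} [Field K] {n : ℕ} (p : n.Partition) (hn : 2 ≤ n) {z : K}
    (hz : z ≠ 0) :
    z ^ p.crank =
      ∑ k ∈ Finset.Icc 2 n, z ^ k * (p.parts.toFinsupp.prod (boundedWeight K k) -
        p.parts.toFinsupp.prod (boundedWeight K (k - 1))) +
      ∑ j ∈ Finset.Icc 1 n, z⁻¹ ^ j *
        (p.parts.toFinsupp.prod (tailWeight z j fun c ↦ if c = j then 1 else 0) -
          p.parts.toFinsupp.prod (tailWeight z j fun _ ↦ 0)) := by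
  have htail : ∀ j ∈ Finset.Icc 1 n, z⁻¹ ^ j *
        (p.parts.toFinsupp.prod (tailWeight z j fun c ↦ if c = j then 1 else 0) -
          p.parts.toFinsupp.prod (tailWeight z j fun _ ↦ 0)) =
      if p.parts.count 1 = j then
        z⁻¹ ^ j * z ^ Multiset.card (p.parts.filter fun i ↦ j < i) else 0 := by
    intro j hj
    have hj1 := (Finset.mem_Icc.1 hj).1
    rw [prod_tailWeight p z hj1, prod_tailWeight p z hj1]
    by_cases h0 : p.parts.count 1 = 0
    · simp [h0, show ¬ 0 = j by omega]
    · by_cases h1 : p.parts.count 1 = j <;> simp [h0, h1, show j ≠ 0 by omega]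
  have hbounded : ∀ k ∈ Finset.Icc 2 n, z ^ k * (p.parts.toFinsupp.prod (boundedWeight K k) -
        p.parts.toFinsupp.prod (boundedWeight K (k - 1))) =
      if p.parts.sup = k then (if p.parts.count 1 = 0 then z ^ k else 0) else 0 := by
    intro k hk
    have hk2 := (Finset.mem_Icc.1 hk).1
    rw [prod_boundedWeight, prod_boundedWeight]
    by_cases h0 : p.parts.count 1 = 0
    · simp only [h0, true_and, if_true]
      rcases lt_trichotomy p.parts.sup k with h | h | h
      · simp [show p.parts.sup ≤ k by omega, show p.parts.sup ≤ k - 1 by omega,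
          show p.parts.sup ≠ k by omega]
      · simp [h, show ¬ k ≤ k - 1 by omega]
      · simp [show ¬ p.parts.sup ≤ k by omega, show ¬ p.parts.sup ≤ k - 1 by omega,
          show p.parts.sup ≠ k by omega]
    · simp [h0]
  rw [Finset.sum_congr rfl htail, Finset.sum_congr rfl hbounded, Finset.sum_ite_eq,
    Finset.sum_ite_eq, Nat.Partition.crank]
  have hle : ∀ i ∈ p.parts, i ≤ n := fun i hi ↦ by
    simpa [p.parts_sum] using Multiset.le_sum_of_mem hi
  by_cases h0 : p.parts.count 1 = 0
  · have hsup : p.parts.sup ∈ Finset.Icc 2 n := by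
      refine Finset.mem_Icc.2 ⟨?_, Multiset.sup_le.2 hle⟩
      obtain ⟨i, hi⟩ := Multiset.exists_mem_of_ne_zero (s := p.parts) (by
        intro h
        have := p.parts_sum
        simp [h] at this
        omega)
      have hi1 : i ≠ 1 := fun h ↦ Multiset.count_eq_zero.1 h0 (h ▸ hi)
      have hi0 := p.parts_pos hi
      exact le_trans (by omega) (Multiset.le_sup hi)
    simp [h0, hsup]
  · have hcount : p.parts.count 1 ∈ Finset.Icc 1 n := by
      refine Finset.mem_Icc.2 ⟨by omega, (Multiset.count_le_card _ _).trans ?_⟩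
      have := Multiset.card_nsmul_le_sum (s := p.parts) (a := 1) fun i hi ↦ p.parts_pos hi
      simpa [p.parts_sum] using this
    rw [if_neg h0, if_neg h0, ite_self, zero_add, if_pos hcount, zpow_sub₀ hz, zpow_natCast,
      zpow_natCast, div_eq_mul_inv, inv_pow, mul_comm]

section GeneratingFunction

variable {K : Type*} [Field K] [TopologicalSpace K] [DiscreteTopology K]

theorem genFun_mul_qProd (f : ℕ → ℕ → K) (y : ℕ → K) (hy : y 0 = 0)
    (hf : ∀ i c, f (i + 2) (c + 1) = y (i + 1) ^ (c + 1)) :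
    Nat.Partition.genFun f * qProd (fun i ↦ C (y i)) =
      1 + ∑' c, f 1 (c + 1) • X ^ (c + 1) := by
  have h := (Nat.Partition.hasProd_genFun f).mul (hasProd_qProd fun i ↦ C (y i))
  refine h.unique ?_
  convert hasProd_single 0 ?_ using 1
  · simp [hy]
  · intro i hi
    obtain ⟨i, rfl⟩ := Nat.exists_eq_succ_of_ne_zero hi
    have hx : constantCoeff (C (y (i + 1)) * X ^ (i + 2)) = 0 := by simp
    have hsum := WithPiTopology.summable_pow_of_constantCoeff_eq_zero hx
    have hgeom := hsum.tsum_eq_zero_add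
    have hone := WithPiTopology.tsum_pow_mul_one_sub_of_constantCoeff_eq_zero hx
    rw [hgeom, pow_zero] at hone
    have hterm (c : ℕ) : f (i + 1 + 1) (c + 1) • (X : K⟦X⟧) ^ ((i + 1 + 1) * (c + 1)) =
        (C (y (i + 1)) * X ^ (i + 2)) ^ (c + 1) := by
      rw [hf, smul_eq_C_mul, mul_pow, ← pow_mul, map_pow]
    simp only [Nat.succ_eq_add_one, hterm]
    exact hone

theorem genFun_boundedWeight {k : ℕ} (hk : 1 ≤ k) :
    Nat.Partition.genFun (boundedWeight K k) = (1 - X) * (qPoch 1 k)⁻¹ := by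
  let y : ℕ → K := fun i ↦ if i = 0 ∨ k < i + 1 then 0 else 1
  have h := genFun_mul_qProd (boundedWeight K k) y (by simp [y]) fun i c ↦ by
    simp only [y, boundedWeight]
    split_ifs <;> simp_all
  have h1 : (∑' c, boundedWeight K k 1 (c + 1) • X ^ (c + 1) : K⟦X⟧) = 0 := by
    simp [boundedWeight]
  have h2 := qProd_mul_prod_comm (y := fun i ↦ C (y i)) (y' := fun _ ↦ 0) (n := k) fun i hi ↦ by
    simp [y, hi]
  have h3 : (∏ i ∈ Finset.range k, (1 - C (y i) * X ^ (i + 1))) * (1 - X) = qPoch 1 k := by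
    obtain ⟨k, rfl⟩ := Nat.exists_eq_add_of_le' hk
    rw [qPoch, Finset.prod_range_succ', Finset.prod_range_succ']
    simp only [y, true_or, if_true, map_zero, zero_mul, sub_zero, mul_one, zero_add, pow_one]
    congr 1
    · refine Finset.prod_congr rfl fun i hi ↦ ?_
      have := Finset.mem_range.1 hi
      simp [show ¬ k + 1 < i + 1 + 1 by omega]
    · simp
  simp only [zero_mul, sub_zero, Finset.prod_const_one, mul_one, qProd_zero, one_mul] at h2
  rw [h1, h2, add_zero] at h
  have h4 := qPoch_mul_inv (1 : K⟦X⟧) k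
  rw [← h3] at h4 ⊢
  generalize (((∏ i ∈ Finset.range k, (1 - C (y i) * X ^ (i + 1))) * (1 - X)) : K⟦X⟧)⁻¹ = b at *
  linear_combination (1 - X) * b * h - Nat.Partition.genFun (boundedWeight K k) * h4

/-- Reciprocal of a product. -/
theorem qProd_mul_inv (y : ℕ → K⟦X⟧) : qProd y * (qProd y)⁻¹ = 1 :=
  PowerSeries.mul_inv_cancel _ (by simp [constantCoeff_qProd])

theorem genFun_tailWeight_sub (z : K) {j : ℕ} (hj : 1 ≤ j) :
    Nat.Partition.genFun (tailWeight z j fun c ↦ if c = j then 1 else 0) -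
      Nat.Partition.genFun (tailWeight z j fun _ ↦ 0) =
      (1 - X) * X ^ j * qBinomialCoeff (C z) j * (qProd fun _ ↦ C z)⁻¹ := by
  let y : ℕ → K := fun i ↦ if i = 0 then 0 else if j < i + 1 then z else 1
  have hy (g : ℕ → K) (i c : ℕ) : tailWeight z j g (i + 2) (c + 1) = y (i + 1) ^ (c + 1) := by
    simp only [y, tailWeight]
    split_ifs <;> simp_all
  have h := genFun_mul_qProd (tailWeight z j fun c ↦ if c = j then 1 else 0) y (by simp [y]) (hy _)
  have h' := genFun_mul_qProd (tailWeight z j fun _ ↦ 0) y (by simp [y]) (hy _)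
  have h1 : (∑' c, tailWeight z j (fun c ↦ if c = j then 1 else 0) 1 (c + 1) • X ^ (c + 1) : K⟦X⟧)
      = X ^ j := by
    obtain ⟨j, rfl⟩ := Nat.exists_eq_add_of_le' hj
    rw [tsum_eq_single j]
    · simp [tailWeight]
    · intro c hc
      simp [tailWeight, hc]
  have h1' : (∑' c, tailWeight z j (fun _ ↦ 0) 1 (c + 1) • X ^ (c + 1) : K⟦X⟧) = 0 := by
    simp [tailWeight]
  have h2 := qProd_mul_prod_comm (y := fun i ↦ C (y i)) (y' := fun _ ↦ C z) (n := j) fun i hi ↦ by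
    simp [y, show i ≠ 0 by omega, hi]
  have h3 : (∏ i ∈ Finset.range j, (1 - C (y i) * X ^ (i + 1))) * (1 - X) = qPoch 1 j := by
    obtain ⟨j, rfl⟩ := Nat.exists_eq_add_of_le' hj
    rw [qPoch, Finset.prod_range_succ', Finset.prod_range_succ']
    simp only [y, if_true, map_zero, zero_mul, sub_zero, mul_one, zero_add, pow_one]
    congr 1
    · refine Finset.prod_congr rfl fun i hi ↦ ?_
      have := Finset.mem_range.1 hi
      simp [show ¬ j + 1 < i + 1 + 1 by omega]
    · simp
  rw [h1] at h
  rw [h1', add_zero] at h'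
  have h4 := qPoch_mul_inv (1 : K⟦X⟧) j
  have h5 := qProd_mul_inv fun _ ↦ C z
  refine mul_right_cancel₀ (qProd_ne_zero fun i ↦ C (y i)) ?_
  rw [sub_mul, h, h', qBinomialCoeff, ← h3]
  rw [← h3] at h4
  change _ * qPoch (C z) j = _ at h2
  generalize (((∏ i ∈ Finset.range j, (1 - C (y i) * X ^ (i + 1))) * (1 - X)) : K⟦X⟧)⁻¹ = b at *
  generalize (qProd fun _ ↦ C z)⁻¹ = c at *
  generalize (∏ i ∈ Finset.range j, (1 - C (y i) * X ^ (i + 1)) : K⟦X⟧) = d at *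
  linear_combination -(1 - X) * X ^ j * b * c * h2 - X ^ j * h5 * (d * (1 - X) * b) - X ^ j * h4

theorem coeff_qBinomialSeries (u : ℕ → K⟦X⟧) (w a : K⟦X⟧)
    (h : HasSum (fun j ↦ u j * (X * w) ^ j) a) (n : ℕ) :
    coeff n a = ∑ j ∈ Finset.range (n + 1), coeff n (u j * (X * w) ^ j) := by
  refine ((WithPiTopology.hasSum_iff_hasSum_coeff K).1 h n).unique
    (hasSum_sum_of_ne_finset_zero fun j hj ↦ ?_)
  have hdvd : X ^ j ∣ u j * (X * w) ^ j := ⟨u j * w ^ j, by ring⟩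
  exact X_pow_dvd_iff.1 hdvd n (by simpa using hj)

/-- The generating function of the crank. -/
theorem sum_zpow_crank {n : ℕ} (hn : 2 ≤ n) {z : K} (hz : z ≠ 0) :
    ∑ p : n.Partition, z ^ p.crank =
      coeff n ((qProd fun _ ↦ 1) * (qProd fun _ ↦ C z)⁻¹ * (qProd fun _ ↦ C z⁻¹)⁻¹) := by
  have hP := qProd_mul_inv fun _ ↦ C z
  have hP' := qProd_mul_inv fun _ ↦ C z⁻¹
  have hE : (qProd fun _ ↦ (1 : K⟦X⟧)) = (1 - X) * qProd fun _ ↦ X := by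
    simpa using qProd_eq_prod_mul (fun _ ↦ (1 : K⟦X⟧)) 1
  have hB := qBinomialSeries_mul_qProd (C z) (C z⁻¹)
  have hzz : C z * X * C z⁻¹ = X := by
    rw [mul_right_comm, ← map_mul, mul_inv_cancel₀ hz, map_one, one_mul]
  rw [hzz] at hB
  have hB0 := qBinomialSeries_mul_qProd 0 (C z)
  simp only [zero_mul, qProd_zero] at hB0
  have hF : (qProd fun _ ↦ 1) * (qProd fun _ ↦ C z)⁻¹ * (qProd fun _ ↦ C z⁻¹)⁻¹ =
      (1 - X) * (qProd fun _ ↦ C z)⁻¹ * qBinomialSeries (C z) (C z⁻¹) := by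
    rw [hE, ← hB]
    linear_combination (1 - X) * (qProd fun _ ↦ C z)⁻¹ * qBinomialSeries (C z) (C z⁻¹) * hP'
  have hF0 : (1 - X) * (qProd fun _ ↦ C z)⁻¹ = (1 - X) * qBinomialSeries 0 (C z) := by
    linear_combination (1 - X) * (qBinomialSeries 0 (C z) * hP - (qProd fun _ ↦ C z)⁻¹ * hB0)
  have hsum := hasSum_of_forall_eq
    ((hasSum_qBinomialSeries (C z) (C z⁻¹)).mul_left ((1 - X) * (qProd fun _ ↦ C z)⁻¹))
    fun j ↦ (mul_assoc _ _ _)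
  have hsum0 := hasSum_of_forall_eq
    ((hasSum_qBinomialSeries 0 (C z)).mul_left (1 - X)) fun j ↦ (mul_assoc _ _ _)
  have hIcc : ∀ f : ℕ → K, ∑ j ∈ Finset.range (n + 1), f j = f 0 + ∑ j ∈ Finset.Icc 1 n, f j := by
    intro f
    rw [Finset.range_eq_Ico, Finset.sum_eq_sum_Ico_succ_bot (by omega)]
    rfl
  have hIcc2 : ∀ f : ℕ → K, ∑ j ∈ Finset.Icc 1 n, f j = f 1 + ∑ j ∈ Finset.Icc 2 n, f j := by
    intro f
    change ∑ j ∈ Finset.Ico 1 (n + 1), f j = _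
    rw [Finset.sum_eq_sum_Ico_succ_bot (by omega)]
    rfl
  have hpoch0 (k : ℕ) : qPoch (0 : K⟦X⟧) k = 1 := by simp [qPoch]
  rw [hF, coeff_qBinomialSeries _ _ _ hsum, hIcc]
  rw [show (1 - X) * (qProd fun _ ↦ C z)⁻¹ * qBinomialCoeff (C z) 0 * (X * C z⁻¹) ^ 0 =
    (1 - X) * qBinomialSeries 0 (C z) by simp [qBinomialCoeff, qPoch, hF0]]
  rw [coeff_qBinomialSeries _ _ _ hsum0, hIcc, hIcc2]
  have hzero : coeff n ((1 - X) * qBinomialCoeff (0 : K⟦X⟧) 0 * (X * C z) ^ 0) = 0 := by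
    simp [qBinomialCoeff, qPoch, coeff_one, coeff_X, show n ≠ 0 by omega, show n ≠ 1 by omega]
  have hone : coeff n ((1 - X) * qBinomialCoeff (0 : K⟦X⟧) 1 * (X * C z) ^ 1) = 0 := by
    have h1 := qPoch_mul_inv (1 : K⟦X⟧) 1
    have : qPoch (1 : K⟦X⟧) 1 = 1 - X := by simp [qPoch]
    rw [qBinomialCoeff, hpoch0, one_mul, ← this, h1]
    simp [coeff_X, show n ≠ 1 by omega]
  rw [hzero, hone, zero_add, zero_add, Finset.sum_congr rfl fun p _ ↦ zpow_crank_eq p hn hz,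
    Finset.sum_add_distrib, Finset.sum_comm, Finset.sum_comm (t := Finset.Icc 1 n)]
  simp_rw [← Finset.mul_sum, Finset.sum_sub_distrib, ← Nat.Partition.coeff_genFun, ← map_sub]
  congr 1
  · refine Finset.sum_congr rfl fun k hk ↦ ?_
    obtain ⟨k, rfl⟩ := Nat.exists_eq_add_of_le' (Finset.mem_Icc.1 hk).1
    rw [genFun_boundedWeight (by omega), genFun_boundedWeight (by omega), ← coeff_C_mul]
    have h1 := qPoch_mul_inv (1 : K⟦X⟧) (k + 1)
    have h2 := qPoch_mul_inv (1 : K⟦X⟧) (k + 2)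
    rw [qPoch_succ] at h2
    congr 1
    rw [qBinomialCoeff, hpoch0, one_mul, map_pow, show k + 2 - 1 = k + 1 by omega, qPoch_succ]
    generalize (qPoch 1 (k + 1) * (1 - 1 * X ^ (k + 1 + 1)) : K⟦X⟧)⁻¹ = b at *
    generalize (qPoch 1 (k + 1) : K⟦X⟧)⁻¹ = c at *
    generalize (qPoch 1 (k + 1) : K⟦X⟧) = d at *
    linear_combination (C z) ^ (k + 2) * (1 - X) * (c * h2 - b * (1 - X ^ (k + 2)) * h1)
  · refine Finset.sum_congr rfl fun j hj ↦ ?_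
    rw [genFun_tailWeight_sub z (Finset.mem_Icc.1 hj).1, ← coeff_C_mul]
    congr 1
    rw [map_pow]
    ring

end GeneratingFunction

section FiniteTripleProduct

/-- Gaussian binomial coefficients. -/
noncomputable def gaussBinom (K : Type*) [Field K] : ℕ → ℕ → K⟦X⟧
  | _, 0 => 1
  | 0, _ + 1 => 0
  | n + 1, k + 1 => gaussBinom K n (k + 1) + X ^ (n - k) * gaussBinom K n k

theorem gaussBinom_zero_right {K : Type*} [Field K] (n : ℕ) : gaussBinom K n 0 = 1 := by
  cases n <;> rfl

theorem gaussBinom_succ_succ {K : Type*} [Field K] (n k : ℕ) :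
    gaussBinom K (n + 1) (k + 1) = gaussBinom K n (k + 1) + X ^ (n - k) * gaussBinom K n k :=
  rfl

theorem gaussBinom_eq_zero_of_lt {K : Type*} [Field K] {n k : ℕ} (h : n < k) :
    gaussBinom K n k = 0 := by
  induction n generalizing k with
  | zero =>
    obtain ⟨k, rfl⟩ := Nat.exists_eq_add_of_lt h
    rfl
  | succ n ih =>
    obtain ⟨k, rfl⟩ := Nat.exists_eq_succ_of_ne_zero (show k ≠ 0 by omega)
    rw [Nat.succ_eq_add_one, gaussBinom_succ_succ, ih (by omega), ih (by omega), mul_zero, add_zero]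

theorem gaussBinom_mul_qPoch {K : Type*} [Field K] (a b : ℕ) :
    gaussBinom K (a + b) a * (qPoch 1 a * qPoch 1 b) = qPoch 1 (a + b) := by
  induction h : a + b generalizing a b with
  | zero =>
    obtain ⟨rfl, rfl⟩ : a = 0 ∧ b = 0 := by omega
    simp [gaussBinom_zero_right, qPoch]
  | succ n ih =>
    rcases a with _ | a
    · obtain rfl : b = n + 1 := by omega
      simp [gaussBinom_zero_right, qPoch]
    · have h1 := ih a b (by omega)
      have hn : n - a = b := by omega
      rw [gaussBinom_succ_succ, qPoch_succ 1 n, qPoch_succ 1 a, hn]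
      rcases b with _ | b
      · rw [gaussBinom_eq_zero_of_lt (by omega)]
        obtain rfl : a = n := by omega
        linear_combination (1 - X ^ (a + 1)) * h1
      · have h2 := ih (a + 1) b (by omega)
        rw [qPoch_succ 1 a] at h2
        rw [qPoch_succ 1 b] at h1 ⊢
        obtain rfl : n = a + (b + 1) := by omega
        linear_combination (1 - X ^ (b + 1)) * h2 + X ^ (b + 1) * (1 - X ^ (a + 1)) * h1

/-- The finite `q`-binomial theorem. -/
theorem prod_add_mul_X_pow {K : Type*} [Field K] (u w : K⟦X⟧) (n : ℕ) :
    ∏ i ∈ Finset.range n, (u + w * X ^ i) =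
      ∑ k ∈ Finset.range (n + 1), gaussBinom K n k * X ^ (k.choose 2) * w ^ k * u ^ (n - k) := by
  induction n with
  | zero => simp [gaussBinom_zero_right]
  | succ n ih =>
    have hterm : ∀ k ∈ Finset.range (n + 1),
        gaussBinom K (n + 1) (k + 1) * X ^ ((k + 1).choose 2) * w ^ (k + 1) *
          u ^ (n + 1 - (k + 1)) =
        gaussBinom K n (k + 1) * X ^ ((k + 1).choose 2) * w ^ (k + 1) * u ^ (n - k) +
        gaussBinom K n k * X ^ (k.choose 2) * w ^ k * u ^ (n - k) * (w * X ^ n) := by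
      intro k hk
      have hk' := Finset.mem_range.1 hk
      obtain ⟨b, rfl⟩ := Nat.exists_eq_add_of_le (show k ≤ n by omega)
      rw [gaussBinom_succ_succ, Nat.choose_succ_succ' k 1, Nat.choose_one_right,
        Nat.add_sub_cancel_left, show k + b + 1 - (k + 1) = b by omega]
      ring
    rw [Finset.prod_range_succ, ih, Finset.sum_range_succ' _ (n + 1), Finset.sum_congr rfl hterm,
      Finset.sum_add_distrib, mul_add, ← Finset.sum_mul]
    have hu : (∑ k ∈ Finset.range (n + 1),
        gaussBinom K n k * X ^ (k.choose 2) * w ^ k * u ^ (n - k)) * u =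
        ∑ k ∈ Finset.range (n + 1 + 1),
          gaussBinom K n k * X ^ (k.choose 2) * w ^ k * u ^ (n + 1 - k) := by
      rw [Finset.sum_range_succ _ (n + 1), gaussBinom_eq_zero_of_lt (show n < n + 1 by omega),
        Finset.sum_mul]
      simp only [zero_mul, add_zero]
      refine Finset.sum_congr rfl fun k hk ↦ ?_
      have hk' := Finset.mem_range.1 hk
      rw [show n + 1 - k = n - k + 1 by omega]
      ring
    rw [hu, Finset.sum_range_succ']
    simp only [gaussBinom_zero_right, Nat.add_sub_add_right]
    ring

/-- The exponent `m (m - 1) / 2` of the theta series. -/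
def triangular (m : ℤ) : ℕ := (m * (m - 1) / 2).toNat

theorem two_mul_triangular (m : ℤ) : 2 * (triangular m : ℤ) = m * (m - 1) := by
  have h0 : 0 ≤ m * (m - 1) := by
    rcases le_or_gt m 0 with h | h <;> nlinarith
  have h2 : 2 ∣ m * (m - 1) := by
    simpa [mul_comm] using (Int.even_mul_succ_self (m - 1)).two_dvd
  rw [triangular]
  omega

/-- The general term of the theta series. -/
noncomputable def thetaTerm {K : Type*} [Field K] (z : K) (m : ℤ) : K⟦X⟧ :=
  C ((-z) ^ m) * X ^ triangular m

theorem prod_mul_prod_eq_sum_thetaTerm {K : Type*} [Field K] {z : K} (hz : z ≠ 0) (N : ℕ) :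
    (∏ i ∈ Finset.range N, (1 - C z * X ^ i)) * qPoch (C z⁻¹) N =
      ∑ k ∈ Finset.range (2 * N + 1), thetaTerm z (k - N) * gaussBinom K (2 * N) k := by
  have h := prod_add_mul_X_pow (X ^ N) (C (-z)) (2 * N)
  have hX : (X : K⟦X⟧) ≠ 0 := X_ne_zero
  have hz' : -z ≠ 0 := neg_ne_zero.2 hz
  have hl : ∏ i ∈ Finset.range (2 * N), ((X : K⟦X⟧) ^ N + C (-z) * X ^ i) =
      X ^ (N * N + N.choose 2) * C ((-z) ^ N) *
        ((∏ i ∈ Finset.range N, (1 - C z * X ^ i)) * qPoch (C z⁻¹) N) := by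
    have hlow : ∀ i ∈ Finset.range N, ((X : K⟦X⟧) ^ N + C (-z) * X ^ i) =
        X ^ i * (C (-z) * (1 - C z⁻¹ * X ^ (N - 1 - i + 1))) := by
      intro i hi
      have hi' := Finset.mem_range.1 hi
      have hzz : C z * C z⁻¹ = (1 : K⟦X⟧) := by rw [← map_mul, mul_inv_cancel₀ hz, map_one]
      obtain ⟨j, rfl⟩ := Nat.exists_eq_add_of_lt hi'
      rw [show i + j + 1 - 1 - i + 1 = j + 1 by omega, map_neg]
      linear_combination (-(X : K⟦X⟧) ^ (i + j + 1)) * hzz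
    have hhigh : ∀ i ∈ Finset.range N, ((X : K⟦X⟧) ^ N + C (-z) * X ^ (N + i)) =
        X ^ N * (1 - C z * X ^ i) := by
      intro i _
      rw [map_neg]
      ring
    rw [two_mul, Finset.prod_range_add, Finset.prod_congr rfl hlow, Finset.prod_congr rfl hhigh,
      Finset.prod_mul_distrib, Finset.prod_mul_distrib, Finset.prod_mul_distrib,
      Finset.prod_range_reflect (fun i ↦ 1 - C z⁻¹ * (X : K⟦X⟧) ^ (i + 1)),
      Finset.prod_pow_eq_pow_sum, Finset.sum_range_id, Nat.choose_two_right]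
    simp only [Finset.prod_const, Finset.card_range, qPoch, map_pow]
    ring
  have hne : (X : K⟦X⟧) ^ (N * N + N.choose 2) * C ((-z) ^ N) ≠ 0 :=
    mul_ne_zero (pow_ne_zero _ hX) (by simp [hz])
  refine mul_left_cancel₀ hne ?_
  rw [← hl, h, Finset.mul_sum]
  refine Finset.sum_congr rfl fun k hk ↦ ?_
  have hk' := Finset.mem_range.1 hk
  rw [thetaTerm]
  have hexp : k.choose 2 + N * (2 * N - k) = N * N + N.choose 2 + triangular (k - N) := by
    have h1 := two_mul_triangular (k - N)
    have h2 := two_mul_triangular k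
    have h3 := two_mul_triangular N
    have hch (a : ℕ) : triangular a = a.choose 2 := by
      have h4 := two_mul_triangular a
      have h5 : a.choose 2 * 2 = a * (a - 1) := by
        rw [Nat.choose_two_right]
        exact Nat.div_mul_cancel (by simpa [mul_comm] using (Nat.even_mul_pred_self a).two_dvd)
      rcases a with _ | a
      · simp [triangular]
      · zify at h5
        push_cast at h4 h5
        simp only [add_sub_cancel_right] at h4 h5
        zify
        linarith
    rw [hch] at h2 h3
    zify [show k ≤ 2 * N by omega]
    linarith
  have hpow : (-z) ^ k = (-z) ^ N * (-z) ^ ((k : ℤ) - N) := by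
    rw [← zpow_natCast, ← zpow_natCast, ← zpow_add₀ hz']
    congr 1
    ring
  rw [← map_pow, hpow, map_mul, ← pow_mul,
    show gaussBinom K (2 * N) k * X ^ k.choose 2 * (C ((-z) ^ N) * C ((-z) ^ ((k : ℤ) - N))) *
      X ^ (N * (2 * N - k)) = gaussBinom K (2 * N) k * C ((-z) ^ N) * C ((-z) ^ ((k : ℤ) - N)) *
      X ^ (k.choose 2 + N * (2 * N - k)) by ring, hexp]
  ring

theorem coeff_thetaTerm_mul_eq_zero {K : Type*} [Field K] (z : K) {m : ℤ} {d : ℕ}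
    (h : d + 2 ≤ m.natAbs) (f : K⟦X⟧) :
    coeff d (thetaTerm z m * f) = 0 := by
  have hlt : d < triangular m := by
    have h1 := two_mul_triangular m
    zify at h ⊢
    rcases abs_cases m with ⟨h2, h3⟩ | ⟨h2, h3⟩ <;> nlinarith
  have hdvd : X ^ triangular m ∣ thetaTerm z m * f := ⟨C ((-z) ^ m) * f, by rw [thetaTerm]; ring⟩
  exact X_pow_dvd_iff.1 hdvd d hlt

end FiniteTripleProduct

section TripleProduct

variable {K : Type*} [Field K] [TopologicalSpace K] [DiscreteTopology K]

theorem X_pow_dvd_qProd_sub_qPoch (k : ℕ) :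
    (X : K⟦X⟧) ^ (k + 1) ∣ (qProd fun _ ↦ 1) - qPoch 1 k := by
  have hfin (j : ℕ) : (X : K⟦X⟧) ^ (k + 1) ∣ qPoch 1 (k + j) - qPoch 1 k := by
    induction j with
    | zero => simp
    | succ j ih =>
      rw [← add_assoc, qPoch_succ]
      obtain ⟨c, hc⟩ := ih
      exact ⟨c - qPoch 1 (k + j) * X ^ j, by linear_combination hc⟩
  rw [X_pow_dvd_iff]
  intro d hd
  obtain ⟨n, hn, hnk⟩ := ((eventually_coeff_eq_of_tendsto
    (hasProd_qProd fun _ ↦ (1 : K⟦X⟧)).tendsto_prod_nat d).and (eventually_ge_atTop k)).exists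
  obtain ⟨j, rfl⟩ := Nat.exists_eq_add_of_le hnk
  have := X_pow_dvd_iff.1 (hfin j) d hd
  rwa [map_sub, qPoch, hn, ← map_sub] at this

theorem X_pow_dvd_qProd_mul_gaussBinom_sub_one {a b M : ℕ} (ha : M ≤ a) (hb : M ≤ b) :
    (X : K⟦X⟧) ^ (M + 1) ∣ (qProd fun _ ↦ 1) * gaussBinom K (a + b) a - 1 := by
  have hdvd (k : ℕ) (hk : M ≤ k) : (X : K⟦X⟧) ^ (M + 1) ∣ (qProd fun _ ↦ 1) - qPoch 1 k :=
    (pow_dvd_pow X (by omega)).trans (X_pow_dvd_qProd_sub_qPoch k)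
  obtain ⟨ca, hca⟩ := hdvd a ha
  obtain ⟨cb, hcb⟩ := hdvd b hb
  obtain ⟨cab, hcab⟩ := hdvd (a + b) (by omega)
  have h := gaussBinom_mul_qPoch (K := K) a b
  have h1 := qPoch_mul_inv (1 : K⟦X⟧) a
  have h2 := qPoch_mul_inv (1 : K⟦X⟧) b
  generalize (qProd fun _ ↦ (1 : K⟦X⟧)) = e at *
  generalize (qPoch (1 : K⟦X⟧) (a + b)) = pab at *
  generalize (qPoch (1 : K⟦X⟧) a)⁻¹ = ia at *
  generalize (qPoch (1 : K⟦X⟧) b)⁻¹ = ib at *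
  generalize (qPoch (1 : K⟦X⟧) a) = pa at *
  generalize (qPoch (1 : K⟦X⟧) b) = pb at *
  have key : (e * gaussBinom K (a + b) a - 1) * (pa * pb) =
      X ^ (M + 1) * (ca * e + cb * pa - e * cab) := by
    linear_combination e * h - e * hcab + e * hca + pa * hcb
  refine ⟨(ca * e + cb * pa - e * cab) * ia * ib, ?_⟩
  linear_combination ia * ib * key -
    (e * gaussBinom K (a + b) a - 1) * (h1 * (pb * ib) + h2)

/-- The Jacobi triple product identity. -/
theorem hasSum_thetaTerm {z : K} (hz : z ≠ 0) :
    HasSum (thetaTerm z) ((qProd fun _ ↦ 1) * (C (1 - z) * (qProd fun _ ↦ C z) *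
      qProd fun _ ↦ C z⁻¹)) := by
  rw [WithPiTopology.hasSum_iff_hasSum_coeff]
  intro d
  have hsum := hasSum_sum_of_ne_finset_zero (f := fun m ↦ coeff d (thetaTerm z m))
    (L := SummationFilter.unconditional ℤ)
    (s := Finset.Icc (-(d + 1 : ℕ) : ℤ) (d + 1 : ℕ)) fun m hm ↦ by
      rw [Finset.mem_Icc] at hm
      simpa using coeff_thetaTerm_mul_eq_zero z (show d + 2 ≤ m.natAbs by omega) 1
  have hlim : Tendsto (fun N ↦ (qProd fun _ ↦ (1 : K⟦X⟧)) *
      ((∏ i ∈ Finset.range (N + 1), (1 - C z * X ^ i)) * qPoch (C z⁻¹) (N + 1))) atTop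
      (𝓝 ((qProd fun _ ↦ 1) * (C (1 - z) * (qProd fun _ ↦ C z) * qProd fun _ ↦ C z⁻¹))) := by
    refine Tendsto.const_mul _ (Tendsto.mul ?_ ?_)
    · refine (((hasProd_qProd fun _ ↦ C z).tendsto_prod_nat).const_mul (C (1 - z))).congr
        fun N ↦ ?_
      rw [Finset.prod_range_succ', mul_comm]
      simp
    · exact (tendsto_add_atTop_iff_nat 1).2 (hasProd_qProd fun _ ↦ C z⁻¹).tendsto_prod_nat
  obtain ⟨N, hN, hNd⟩ := ((eventually_coeff_eq_of_tendsto hlim d).and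
    (eventually_ge_atTop (2 * d + 1))).exists
  rw [← hN, prod_mul_prod_eq_sum_thetaTerm hz, Finset.mul_sum, map_sum]
  have hshift : ∑ k ∈ Finset.range (2 * (N + 1) + 1), coeff d ((qProd fun _ ↦ 1) *
      (thetaTerm z (k - (N + 1 : ℕ)) * gaussBinom K (2 * (N + 1)) k)) =
      ∑ m ∈ Finset.Icc (-(d + 1 : ℕ) : ℤ) (d + 1 : ℕ), coeff d (thetaTerm z m) := by
    symm
    refine Finset.sum_of_injOn (fun m ↦ (m + (N + 1 : ℕ)).toNat) ?_ ?_ ?_ ?_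
    · intro a ha b hb hab
      simp only [Finset.coe_Icc, Set.mem_Icc] at ha hb hab
      omega
    · intro a ha
      simp only [Finset.coe_Icc, Set.mem_Icc, Finset.coe_range, Set.mem_Iio] at ha ⊢
      omega
    · intro k hk hk'
      rw [mul_left_comm]
      refine coeff_thetaTerm_mul_eq_zero z ?_ _
      by_contra hlt
      refine hk' ⟨(k : ℤ) - (N + 1 : ℕ), ?_, ?_⟩
      · simp only [Finset.coe_Icc, Set.mem_Icc]
        omega
      · simp
    · intro m hm
      rw [Finset.mem_Icc] at hm
      obtain ⟨a, ha⟩ := Int.eq_ofNat_of_zero_le (show 0 ≤ m + (N + 1 : ℕ) by omega)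
      obtain ⟨b, hb⟩ := Nat.exists_eq_add_of_le (show a ≤ 2 * (N + 1) by omega)
      obtain ⟨c, hc⟩ := X_pow_dvd_qProd_mul_gaussBinom_sub_one (K := K) (M := d)
        (show d ≤ a by omega) (show d ≤ b by omega)
      rw [show (m + (N + 1 : ℕ)).toNat = a by omega, show (a : ℤ) - (N + 1 : ℕ) = m by omega, hb,
        mul_left_comm, show (qProd fun _ ↦ (1 : K⟦X⟧)) * gaussBinom K (a + b) a =
          1 + X ^ (d + 1) * c by linear_combination hc, mul_add, mul_one, map_add, left_eq_add]
      have hdvd : X ^ (d + 1) ∣ thetaTerm z m * (X ^ (d + 1) * c) := ⟨thetaTerm z m * c, by ring⟩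
      exact X_pow_dvd_iff.1 hdvd d (by omega)
  rw [hshift]
  exact hsum

/-- Euler's pentagonal number theorem. -/
theorem hasSum_pentagonal :
    HasSum (fun k : ℤ ↦ C ((-1 : K) ^ k) * X ^ pentagonal k) (qProd fun _ ↦ (1 : K⟦X⟧)) := by
  have hE : (qProd fun _ ↦ (1 : K⟦X⟧)) = pentagonalSeries K := by
    simpa [qProd] using WithPiTopology.tprod_one_sub_X_pow K
  rw [hE]
  refine hasSum_of_forall_eq (WithPiTopology.hasSum_pentagonalSeries K) fun k ↦ ?_
  rcases Int.even_or_odd k with h | h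
  · simp [h.neg_one_zpow, Int.negOnePow_even k h]
  · simp [h.neg_one_zpow, Int.negOnePow_odd k h]

end TripleProduct

section RootsOfUnity

theorem prod_one_sub_pow_mul {K : Type*} [Field K] {t : ℕ} (ht : 0 < t) {ζ : K}
    (hζ : IsPrimitiveRoot ζ t) (x : K⟦X⟧) :
    ∏ j ∈ Finset.range t, (1 - C (ζ ^ j) * x) = 1 - x ^ t := by
  have hinj : Function.Injective (C : K →+* K⟦X⟧) := C_injective
  have hζ' := hζ.map_of_injective hinj
  have : NeZero t := ⟨ht.ne'⟩
  have h := hζ'.pow_sub_pow_eq_prod_sub_mul 1 x ht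
  rw [one_pow] at h
  rw [h]
  refine Finset.prod_bij (fun j _ ↦ C (ζ ^ j)) (fun j _ ↦ ?_) (fun i hi j hj hij ↦ ?_)
    (fun y hy ↦ ?_) fun j _ ↦ rfl
  · rw [Polynomial.mem_nthRootsFinset ht, map_pow, ← pow_mul, mul_comm, pow_mul, hζ'.pow_eq_one,
      one_pow]
  · exact hζ.pow_inj (Finset.mem_range.1 hi) (Finset.mem_range.1 hj) (hinj hij)
  · rw [Polynomial.mem_nthRootsFinset ht] at hy
    obtain ⟨i, hi, rfl⟩ := hζ'.eq_pow_of_pow_eq_one hy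
    exact ⟨i, Finset.mem_range.2 hi, map_pow _ _ _⟩

theorem coeff_mul_eq_zero_of_not_dvd {K : Type*} [Field K] {t : ℕ} {f g : K⟦X⟧}
    (hf : ∀ d, ¬ t ∣ d → coeff d f = 0) (hg : ∀ d, ¬ t ∣ d → coeff d g = 0) (d : ℕ)
    (hd : ¬ t ∣ d) : coeff d (f * g) = 0 := by
  rw [coeff_mul]
  refine Finset.sum_eq_zero fun x hx ↦ ?_
  rw [Finset.HasAntidiagonal.mem_antidiagonal] at hx
  by_cases h1 : t ∣ x.1
  · rw [hg x.2 fun h2 ↦ hd (hx ▸ dvd_add h1 h2), mul_zero]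
  · rw [hf x.1 h1, zero_mul]

/-- Dividing by a power series in `X ^ t` preserves the vanishing of the coefficients in a residue
class modulo `t`. -/
theorem coeff_eq_zero_of_mul {K : Type*} [Field K] {t r : ℕ} {f h : K⟦X⟧}
    (h0 : constantCoeff h = 1) (hh : ∀ d, ¬ t ∣ d → coeff d h = 0)
    (hfh : ∀ n, n % t = r → coeff n (f * h) = 0) (n : ℕ) (hn : n % t = r) : coeff n f = 0 := by
  induction n using Nat.strong_induction_on with
  | _ n ih =>
    have h1 := hfh n hn
    rw [coeff_mul, Finset.sum_eq_single (n, 0)] at h1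
    · simpa [h0] using h1
    · intro x hx hne
      rw [Finset.HasAntidiagonal.mem_antidiagonal] at hx
      by_cases hd : t ∣ x.2
      · have hx2 : x.2 ≠ 0 := fun h2 ↦ hne (Prod.ext (by simpa [h2] using hx) h2)
        rw [ih x.1 (by omega), zero_mul]
        rw [← hn, ← hx]
        obtain ⟨c, hc⟩ := hd
        rw [hc, Nat.add_mul_mod_self_left]
      · rw [hh _ hd, mul_zero]
    · simp

theorem coeff_C_mul_X_pow_eq {K : Type*} [Field K] {a b : K} {m k n : ℕ} (h : m = k)
    (hab : n = k → a = -b) :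
    coeff n (C a * X ^ m) = -coeff n (C b * X ^ k) := by
  subst h
  rw [coeff_C_mul_X_pow, coeff_C_mul_X_pow]
  split_ifs with hn
  · exact hab hn
  · simp

theorem C_mul_X_pow_mul_C_mul_X_pow {K : Type*} [Field K] (a b : K) (m k : ℕ) :
    C a * X ^ m * (C b * X ^ k) = C (a * b) * X ^ (m + k) := by
  rw [map_mul, pow_add]
  ring

variable {K : Type*} [Field K] [TopologicalSpace K] [DiscreteTopology K]

theorem coeff_prod_qProd_eq_zero {t : ℕ} (ht : 0 < t) {ζ : K} (hζ : IsPrimitiveRoot ζ t) (d : ℕ)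
    (hd : ¬ t ∣ d) : coeff d (∏ j ∈ Finset.range t, qProd fun _ ↦ C (ζ ^ j)) = 0 := by
  have h := hasProd_prod (s := Finset.range t) fun j _ ↦ hasProd_qProd fun _ ↦ C (ζ ^ j)
  simp only [prod_one_sub_pow_mul ht hζ] at h
  obtain ⟨N, hN⟩ := (eventually_coeff_eq_of_tendsto h.tendsto_prod_nat d).exists
  rw [← hN]
  clear hN
  induction N generalizing d with
  | zero =>
    have hd0 : d ≠ 0 := fun h0 ↦ hd (h0 ▸ dvd_zero t)
    simp [coeff_one, hd0]
  | succ N ih =>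
    rw [Finset.prod_range_succ]
    refine coeff_mul_eq_zero_of_not_dvd ih (fun e he ↦ ?_) d hd
    have he0 : e ≠ 0 := fun h0 ↦ he (h0 ▸ dvd_zero t)
    have he1 : e ≠ (N + 1) * t := fun h1 ↦ he (h1 ▸ dvd_mul_left t _)
    simp [coeff_one, ← pow_mul, coeff_X_pow, he0, he1]

/-- The crank generating function may be multiplied by the product over all roots of unity. -/
theorem coeff_crankSeries_eq_zero {t r : ℕ} (ht : 0 < t) {ζ : K} (hζ : IsPrimitiveRoot ζ t)
    {f : K⟦X⟧} {c : K} (hc : c ≠ 0)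
    (h : ∀ n, n % t = r → coeff n (C c * f * ∏ j ∈ Finset.range t, qProd fun _ ↦ C (ζ ^ j)) = 0)
    (n : ℕ) (hn : n % t = r) : coeff n f = 0 := by
  have := coeff_eq_zero_of_mul (f := C c * f)
    (by rw [map_prod]; exact Finset.prod_eq_one fun j _ ↦ constantCoeff_qProd _)
    (coeff_prod_qProd_eq_zero ht hζ) h n hn
  simpa [hc] using this

end RootsOfUnity

section FiveSeven

theorem triangular_one_sub (m : ℤ) : triangular (1 - m) = triangular m := by
  rw [triangular, triangular]
  congr 2
  ring

theorem zpow_eq_zpow_of_dvd {G : Type*} [DivisionRing G] {ζ : G} {t : ℕ} (hζ : ζ ^ t = 1)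
    (h0 : ζ ≠ 0) {a b : ℤ} (h : (t : ℤ) ∣ a - b) : ζ ^ a = ζ ^ b := by
  obtain ⟨c, hc⟩ := h
  rw [show a = b + t * c by omega, zpow_add₀ h0, zpow_mul, zpow_natCast, hζ, one_zpow, mul_one]

theorem neg_zpow_one_sub {K : Type*} [Field K] {ξ : K} {t : ℕ} (hξ : ξ ^ t = 1) (h0 : ξ ≠ 0) {m : ℤ}
    (h : (t : ℤ) ∣ 2 * m - 1) : (-ξ) ^ (1 - m) = -(-ξ) ^ m := by
  have h1 : ξ ^ (1 - m) = ξ ^ m := (zpow_eq_zpow_of_dvd hξ h0 (by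
    rwa [show m - (1 - m) = 2 * m - 1 by ring])).symm
  have h2 : (-1 : K) ^ (1 - m) = -(-1) ^ m := by
    rw [zpow_sub₀ (by simp), zpow_one]
    rcases Int.even_or_odd m with h | h <;> simp [h.neg_one_zpow]
  rw [← neg_one_mul ξ, mul_zpow, mul_zpow, h1, h2, neg_mul]

theorem five_dvd_of_pentagonal_add_triangular {k m : ℤ} {n : ℕ} (hn : n % 5 = 4)
    (h : n = pentagonal k + triangular m) : (5 : ℤ) ∣ 2 * m - 1 := by
  have h1 := two_mul_natCast_pentagonal k
  have h2 := two_mul_triangular m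
  obtain ⟨j, rfl⟩ : ∃ j, n = 5 * j + 4 := ⟨n / 5, by omega⟩
  have h3 : (5 : ℤ) ∣ k * (3 * k - 1) + m * (m - 1) - 8 := ⟨2 * j, by
    zify at h
    linarith⟩
  have key : ∀ k m : ZMod 5, k * (3 * k - 1) + m * (m - 1) - 8 = 0 → 2 * m - 1 = 0 := by decide
  have h4 := key k m (by exact_mod_cast (ZMod.intCast_zmod_eq_zero_iff_dvd _ 5).2 h3)
  exact (ZMod.intCast_zmod_eq_zero_iff_dvd _ 5).1 (by exact_mod_cast h4)

theorem seven_dvd_of_triangular_add_triangular {m l : ℤ} {n : ℕ} (hn : n % 7 = 5)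
    (h : n = triangular m + triangular l) : (7 : ℤ) ∣ 2 * m - 1 := by
  have h1 := two_mul_triangular m
  have h2 := two_mul_triangular l
  obtain ⟨j, rfl⟩ : ∃ j, n = 7 * j + 5 := ⟨n / 7, by omega⟩
  have h3 : (7 : ℤ) ∣ m * (m - 1) + l * (l - 1) - 10 := ⟨2 * j, by
    zify at h
    linarith⟩
  have key : ∀ m l : ZMod 7, m * (m - 1) + l * (l - 1) - 10 = 0 → 2 * m - 1 = 0 := by decide
  have h4 := key m l (by exact_mod_cast (ZMod.intCast_zmod_eq_zero_iff_dvd _ 7).2 h3)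
  exact (ZMod.intCast_zmod_eq_zero_iff_dvd _ 7).1 (by exact_mod_cast h4)

variable {K : Type*} [Field K] [CharZero K] [TopologicalSpace K] [DiscreteTopology K]

theorem coeff_crank_five {ζ : K} (hζ : IsPrimitiveRoot ζ 5) (n : ℕ) (hn : n % 5 = 4) :
    coeff n ((qProd fun _ ↦ 1) * (qProd fun _ ↦ C ζ)⁻¹ * (qProd fun _ ↦ C ζ⁻¹)⁻¹) = 0 := by
  have h0 : ζ ≠ 0 := hζ.ne_zero (by simp)
  have h02 : ζ ^ 2 ≠ 0 := pow_ne_zero 2 h0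
  have hc : 1 - ζ ^ 2 ≠ 0 := fun h ↦
    hζ.pow_ne_one_of_pos_of_lt (by norm_num) (by norm_num) (sub_eq_zero.1 h).symm
  have hinv : ζ⁻¹ = ζ ^ 4 := inv_eq_of_mul_eq_one_right (by rw [← pow_succ', hζ.pow_eq_one])
  have hinv2 : (ζ ^ 2)⁻¹ = ζ ^ 3 :=
    inv_eq_of_mul_eq_one_right (by rw [← pow_add, hζ.pow_eq_one])
  refine coeff_crankSeries_eq_zero (by norm_num) hζ hc (fun n hn ↦ ?_) n hn
  have hsum := hasSum_mul (hasSum_pentagonal (K := K)) (hasSum_thetaTerm h02)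
  refine Eq.trans (congrArg _ ?_) (coeff_eq_zero_of_hasSum_of_equiv hsum n
    ((Equiv.refl ℤ).prodCongr (Equiv.subLeft 1)) fun p ↦ ?_)
  · have h1 := qProd_mul_inv fun _ ↦ C ζ
    have h4 := qProd_mul_inv fun _ ↦ C ζ⁻¹
    simp only [Finset.prod_range_succ, Finset.prod_range_zero, pow_zero, pow_one, map_one,
      hinv, hinv2] at h1 h4 ⊢
    generalize (qProd fun _ ↦ C ζ)⁻¹ = i1 at *
    generalize (qProd fun _ ↦ C (ζ ^ 4))⁻¹ = i4 at *
    generalize (qProd fun _ ↦ C ζ) = p1 at *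
    generalize (qProd fun _ ↦ C (ζ ^ 2)) = p2 at *
    generalize (qProd fun _ ↦ C (ζ ^ 3)) = p3 at *
    generalize (qProd fun _ ↦ C (ζ ^ 4)) = p4 at *
    generalize (qProd fun _ ↦ (1 : K⟦X⟧)) = e at *
    linear_combination C (1 - ζ ^ 2) * e * e * p2 * p3 * (h1 * p4 * i4 + h4)
  · obtain ⟨k, m⟩ := p
    simp only [Equiv.prodCongr_apply, Prod.map, Equiv.refl_apply, Equiv.subLeft_apply, thetaTerm,
      triangular_one_sub]
    rw [C_mul_X_pow_mul_C_mul_X_pow, C_mul_X_pow_mul_C_mul_X_pow]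
    refine coeff_C_mul_X_pow_eq rfl fun h ↦ ?_
    rw [neg_zpow_one_sub (by rw [← pow_mul, mul_comm, pow_mul, hζ.pow_eq_one, one_pow]) h02
      (five_dvd_of_pentagonal_add_triangular hn h), mul_neg]

theorem coeff_crank_seven {ζ : K} (hζ : IsPrimitiveRoot ζ 7) (n : ℕ) (hn : n % 7 = 5) :
    coeff n ((qProd fun _ ↦ 1) * (qProd fun _ ↦ C ζ)⁻¹ * (qProd fun _ ↦ C ζ⁻¹)⁻¹) = 0 := by
  have h0 : ζ ≠ 0 := hζ.ne_zero (by simp)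
  have h02 : ζ ^ 2 ≠ 0 := pow_ne_zero 2 h0
  have h03 : ζ ^ 3 ≠ 0 := pow_ne_zero 3 h0
  have hc (j : ℕ) (hj : j ≠ 0) (hj' : j < 7) : 1 - ζ ^ j ≠ 0 := fun h ↦
    hζ.pow_ne_one_of_pos_of_lt hj hj' (sub_eq_zero.1 h).symm
  have hinv : ζ⁻¹ = ζ ^ 6 := inv_eq_of_mul_eq_one_right (by rw [← pow_succ', hζ.pow_eq_one])
  have hinv2 : (ζ ^ 2)⁻¹ = ζ ^ 5 :=
    inv_eq_of_mul_eq_one_right (by rw [← pow_add, hζ.pow_eq_one])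
  have hinv3 : (ζ ^ 3)⁻¹ = ζ ^ 4 :=
    inv_eq_of_mul_eq_one_right (by rw [← pow_add, hζ.pow_eq_one])
  refine coeff_crankSeries_eq_zero (by norm_num) hζ
    (mul_ne_zero (hc 2 (by norm_num) (by norm_num)) (hc 3 (by norm_num) (by norm_num)))
    (fun n hn ↦ ?_) n hn
  have hsum := hasSum_mul (hasSum_thetaTerm h02) (hasSum_thetaTerm h03)
  refine Eq.trans (congrArg _ ?_) (coeff_eq_zero_of_hasSum_of_equiv hsum n
    ((Equiv.subLeft 1).prodCongr (Equiv.refl ℤ)) fun p ↦ ?_)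
  · have h1 := qProd_mul_inv fun _ ↦ C ζ
    have h6 := qProd_mul_inv fun _ ↦ C ζ⁻¹
    simp only [Finset.prod_range_succ, Finset.prod_range_zero, pow_zero, pow_one, map_one,
      hinv, hinv2, hinv3, map_mul] at h1 h6 ⊢
    generalize (qProd fun _ ↦ C ζ)⁻¹ = i1 at *
    generalize (qProd fun _ ↦ C (ζ ^ 6))⁻¹ = i6 at *
    generalize (qProd fun _ ↦ C ζ) = p1 at *
    generalize (qProd fun _ ↦ C (ζ ^ 2)) = p2 at *
    generalize (qProd fun _ ↦ C (ζ ^ 3)) = p3 at *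
    generalize (qProd fun _ ↦ C (ζ ^ 4)) = p4 at *
    generalize (qProd fun _ ↦ C (ζ ^ 5)) = p5 at *
    generalize (qProd fun _ ↦ C (ζ ^ 6)) = p6 at *
    generalize (qProd fun _ ↦ (1 : K⟦X⟧)) = e at *
    linear_combination C (1 - ζ ^ 2) * C (1 - ζ ^ 3) * e * e * p2 * p3 * p4 * p5 *
      (h1 * p6 * i6 + h6)
  · obtain ⟨m, l⟩ := p
    simp only [Equiv.prodCongr_apply, Prod.map, Equiv.refl_apply, Equiv.subLeft_apply, thetaTerm,
      triangular_one_sub]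
    rw [C_mul_X_pow_mul_C_mul_X_pow, C_mul_X_pow_mul_C_mul_X_pow]
    refine coeff_C_mul_X_pow_eq rfl fun h ↦ ?_
    rw [neg_zpow_one_sub (by rw [← pow_mul, mul_comm, pow_mul, hζ.pow_eq_one, one_pow]) h02
      (seven_dvd_of_triangular_add_triangular hn h), neg_mul]

end FiveSeven

section Eleven

theorem thetaTerm_mul_thetaTerm {K : Type*} [Field K] {a b : K} (ha : a ≠ 0) (hb : b ≠ 0)
    (m n k l : ℤ) :
    thetaTerm a m * thetaTerm b n * (thetaTerm (a * b) k * thetaTerm (a / b) l) =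
      C ((-1) ^ (m + n + k + l) * (a ^ (m + k + l) * b ^ (n + k - l))) *
        X ^ (triangular m + triangular n + (triangular k + triangular l)) := by
  have h1 : (-1 : K) ≠ 0 := by simp
  simp only [thetaTerm, C_mul_X_pow_mul_C_mul_X_pow]
  congr 2
  rw [← neg_one_mul a, ← neg_one_mul b, ← neg_one_mul (a * b), ← neg_one_mul (a / b)]
  simp only [mul_zpow, div_zpow, zpow_add₀ h1, zpow_add₀ ha, zpow_add₀ hb, zpow_sub₀ hb]
  field_simp

theorem neg_one_zpow_eq_neg {K : Type*} [Field K] {a b : ℤ} (h : Odd (a - b)) :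
    (-1 : K) ^ a = -(-1) ^ b := by
  rw [show a = a - b + b by ring, zpow_add₀ (by simp), h.neg_one_zpow, neg_one_mul]

/-- The exponent of the summand `(k, l)` in the fibre of Winquist's quadruple sum over `(s, t)`. -/
def winquistExponent (s t k l : ℤ) : ℕ :=
  triangular (s - k - l) + triangular (t - 1 - k + l) + (triangular k + triangular l)

theorem two_mul_winquistExponent (s t k l : ℤ) :
    2 * (winquistExponent s t k l : ℤ) = 3 * k ^ 2 - (2 * (s + t) - 3) * k + 3 * l ^ 2 -
      (2 * (s - t) + 3) * l + s ^ 2 + (t - 1) ^ 2 - s - t + 1 := by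
  rw [winquistExponent]
  push_cast
  linear_combination two_mul_triangular (s - k - l) + two_mul_triangular (t - 1 - k + l) +
    two_mul_triangular k + two_mul_triangular l

/-- The summand `(s, t, k, l)` of Winquist's quadruple sum. -/
noncomputable def winquistSummand {K : Type*} [Field K] (a b : K) (s t k l : ℤ) : K⟦X⟧ :=
  C ((-1) ^ (s + t - 1 - k + l) * (a ^ s * b ^ (t - 1))) * X ^ winquistExponent s t k l

/-- The general term of the double series in Winquist's identity. -/
noncomputable def winquistTerm {K : Type*} [Field K] (a b : K) (s t : ℤ) : K⟦X⟧ :=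
  if 3 ∣ s + t ∨ 3 ∣ s - t then 0 else winquistSummand a b s t ((s + t) / 3) ((s - t) / 3 + 1)

theorem six_mul_winquistExponent {s t : ℤ} (h : ¬ (3 ∣ s + t ∨ 3 ∣ s - t)) :
    6 * (winquistExponent s t ((s + t) / 3) ((s - t) / 3 + 1) : ℤ) =
      s ^ 2 - 3 * s + t ^ 2 - 3 * t + 2 := by
  have h1 := two_mul_winquistExponent s t ((s + t) / 3) ((s - t) / 3 + 1)
  obtain ⟨j, hj⟩ : ∃ j, (s + t) / 3 = j := ⟨_, rfl⟩
  obtain ⟨i, hi⟩ : ∃ i, (s - t) / 3 = i := ⟨_, rfl⟩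
  rw [hj, hi] at h1 ⊢
  have hA : (s + t - 3 * j - 1) * (s + t - 3 * j - 2) = 0 := by
    rcases (by omega : s + t = 3 * j + 1 ∨ s + t = 3 * j + 2) with h | h <;> rw [h] <;> ring
  have hB : (s - t - 3 * i - 1) * (s - t - 3 * i - 2) = 0 := by
    rcases (by omega : s - t = 3 * i + 1 ∨ s - t = 3 * i + 2) with h | h <;> rw [h] <;> ring
  linear_combination 3 * h1 + hA + hB

theorem coeff_winquistTerm_swap {K : Type*} [Field K] {ζ : K} (hζ : IsPrimitiveRoot ζ 11) {n : ℕ}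
    (hn : n % 11 = 6) (s t : ℤ) :
    coeff n (winquistTerm (ζ ^ 5) (ζ ^ 2) t s) = -coeff n (winquistTerm (ζ ^ 5) (ζ ^ 2) s t) := by
  have h0 : ζ ≠ 0 := hζ.ne_zero (by simp)
  by_cases h : 3 ∣ s + t ∨ 3 ∣ s - t
  · rw [winquistTerm, winquistTerm, if_pos h, if_pos (by omega), map_zero, neg_zero]
  have h' : ¬ (3 ∣ t + s ∨ 3 ∣ t - s) := by omega
  rw [winquistTerm, winquistTerm, if_neg h, if_neg h']
  have h1 := six_mul_winquistExponent h
  have h2 := six_mul_winquistExponent h'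
  refine coeff_C_mul_X_pow_eq (by zify; linarith) fun hne ↦ ?_
  rw [← hne] at h1
  obtain ⟨j, rfl⟩ : ∃ j, n = 11 * j + 6 := ⟨n / 11, by omega⟩
  have h3 : (11 : ℤ) ∣ s ^ 2 - 3 * s + t ^ 2 - 3 * t - 1 := ⟨6 * j + 3, by
    push_cast at h1
    linarith⟩
  have key : ∀ s t : ZMod 11, s ^ 2 - 3 * s + t ^ 2 - 3 * t - 1 = 0 → t - s = 0 := by decide
  have h4 := key s t (by exact_mod_cast (ZMod.intCast_zmod_eq_zero_iff_dvd _ 11).2 h3)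
  have h5 : (11 : ℤ) ∣ t - s :=
    (ZMod.intCast_zmod_eq_zero_iff_dvd _ 11).1 (by exact_mod_cast h4)
  have h6 : (ζ ^ 5) ^ t * (ζ ^ 2) ^ (s - 1) = (ζ ^ 5) ^ s * (ζ ^ 2) ^ (t - 1) := by
    simp only [← zpow_natCast, ← zpow_mul, ← zpow_add₀ h0]
    refine zpow_eq_zpow_of_dvd hζ.pow_eq_one h0 ?_
    push_cast
    omega
  rw [h6, neg_one_zpow_eq_neg, neg_mul]
  have h7 : (t - s) / 3 = -((s - t) / 3) - 1 := by omega
  exact ⟨-((s - t) / 3) - 1, by rw [h7, add_comm t s]; ring⟩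

/-- The change of variables `s = m + k + l`, `t = n + k - l + 1`. -/
def winquistEquiv : (ℤ × ℤ) × (ℤ × ℤ) ≃ (ℤ × ℤ) × (ℤ × ℤ) where
  toFun x := ((x.1.1 - x.2.1 - x.2.2, x.1.2 - 1 - x.2.1 + x.2.2), x.2)
  invFun x := ((x.1.1 + x.2.1 + x.2.2, x.1.2 + 1 + x.2.1 - x.2.2), x.2)
  left_inv x := by ext <;> simp <;> ring
  right_inv x := by ext <;> simp <;> ring

variable {K : Type*} [Field K] [TopologicalSpace K] [DiscreteTopology K]

theorem exists_hasSum_pentagonal {c : ℤ} (hc : c = 1 ∨ c = -1) :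
    ∃ p : ℤ → ℕ, (∀ k, 2 * (p k : ℤ) = k * (3 * k + c)) ∧
      HasSum (fun k ↦ C ((-1 : K) ^ k) * X ^ p k) (qProd fun _ ↦ (1 : K⟦X⟧)) := by
  rcases hc with rfl | rfl
  · refine ⟨fun k ↦ pentagonal (-k), fun k ↦ two_mul_natCast_pentagonal_neg k, ?_⟩
    rw [← (Equiv.neg ℤ).hasSum_iff]
    refine hasSum_of_forall_eq hasSum_pentagonal fun k ↦ ?_
    simp [zpow_neg, ← inv_zpow]
  · exact ⟨pentagonal, fun k ↦ two_mul_natCast_pentagonal k, hasSum_pentagonal⟩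

theorem summable_fiber {β γ : Type*} {f : β × γ → K⟦X⟧} (hf : Summable f) (b : β) :
    Summable fun c ↦ f (b, c) := by
  rw [WithPiTopology.summable_iff_summable_coeff]
  intro d
  refine summable_of_hasFiniteSupport ?_
  exact (finite_support_coeff hf d).preimage (Prod.mk_right_injective b).injOn

theorem hasSum_winquistSummand (a b : K) {s t : ℤ} (h : ¬ (3 ∣ s + t ∨ 3 ∣ s - t)) :
    HasSum (fun x : ℤ × ℤ ↦ winquistSummand a b s t x.1 x.2)
      (winquistTerm a b s t * ((qProd fun _ ↦ 1) * qProd fun _ ↦ 1)) := by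
  obtain ⟨j, hj⟩ : ∃ j, (s + t) / 3 = j := ⟨_, rfl⟩
  obtain ⟨i, hi⟩ : ∃ i, (s - t) / 3 = i := ⟨_, rfl⟩
  obtain ⟨p, hp, hpE⟩ := exists_hasSum_pentagonal (K := K)
    (show 6 * j + 3 - 2 * (s + t) = 1 ∨ 6 * j + 3 - 2 * (s + t) = -1 by omega)
  obtain ⟨q, hq, hqE⟩ := exists_hasSum_pentagonal (K := K)
    (show 6 * i + 3 - 2 * (s - t) = 1 ∨ 6 * i + 3 - 2 * (s - t) = -1 by omega)
  rw [winquistTerm, if_neg h, hj, hi,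
    ← ((Equiv.addRight j).prodCongr (Equiv.addRight (i + 1))).hasSum_iff]
  refine hasSum_of_forall_eq ((hasSum_mul hpE hqE).mul_left _) fun ⟨k, l⟩ ↦ ?_
  simp only [Function.comp_apply, Equiv.prodCongr_apply, Prod.map, Equiv.coe_addRight,
    winquistSummand, C_mul_X_pow_mul_C_mul_X_pow]
  have hexp : winquistExponent s t (k + j) (l + (i + 1)) =
      winquistExponent s t j (i + 1) + (p k + q l) := by
    have h1 := two_mul_winquistExponent s t (k + j) (l + (i + 1))
    have h2 := two_mul_winquistExponent s t j (i + 1)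
    zify
    linarith [hp k, hq l]
  have hsign : (-1 : K) ^ (s + t - 1 - (k + j) + (l + (i + 1))) =
      (-1) ^ (s + t - 1 - j + (i + 1)) * ((-1) ^ k * (-1) ^ l) := by
    rw [show s + t - 1 - (k + j) + (l + (i + 1)) = s + t - 1 - j + (i + 1) + (-k + l) by ring,
      zpow_add₀ (by simp), zpow_add₀ (by simp) (-k), zpow_neg, ← inv_zpow, inv_neg_one]
  rw [hexp, hsign]
  congr 2
  ring

theorem eq_zero_of_hasSum_winquistSummand [CharZero K] {a b : K} {s t : ℤ} {c : K⟦X⟧}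
    (hc : HasSum (fun x : ℤ × ℤ ↦ winquistSummand a b s t x.1 x.2) c)
    (h : 3 ∣ s + t ∨ 3 ∣ s - t) : c = 0 := by
  ext n
  rw [map_zero]
  rcases h with ⟨j, hj⟩ | ⟨i, hi⟩
  · refine coeff_eq_zero_of_hasSum_of_equiv hc n
      ((Equiv.subLeft (2 * j - 1)).prodCongr (Equiv.refl ℤ)) fun ⟨k, l⟩ ↦ ?_
    refine coeff_C_mul_X_pow_eq ?_ fun _ ↦ ?_
    · have h1 := two_mul_winquistExponent s t (2 * j - 1 - k) l
      have h2 := two_mul_winquistExponent s t k l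
      rw [hj] at h1 h2
      simp only [Equiv.prodCongr_apply, Prod.map, Equiv.refl_apply, Equiv.subLeft_apply]
      zify
      linarith
    · simp only [Equiv.prodCongr_apply, Prod.map, Equiv.refl_apply, Equiv.subLeft_apply]
      rw [neg_one_zpow_eq_neg, neg_mul]
      rw [Int.odd_iff]
      omega
  · refine coeff_eq_zero_of_hasSum_of_equiv hc n
      ((Equiv.refl ℤ).prodCongr (Equiv.subLeft (2 * i + 1))) fun ⟨k, l⟩ ↦ ?_
    refine coeff_C_mul_X_pow_eq ?_ fun _ ↦ ?_
    · have h1 := two_mul_winquistExponent s t k (2 * i + 1 - l)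
      have h2 := two_mul_winquistExponent s t k l
      rw [hi] at h1 h2
      simp only [Equiv.prodCongr_apply, Prod.map, Equiv.refl_apply, Equiv.subLeft_apply]
      zify
      linarith
    · simp only [Equiv.prodCongr_apply, Prod.map, Equiv.refl_apply, Equiv.subLeft_apply]
      rw [neg_one_zpow_eq_neg, neg_mul]
      rw [Int.odd_iff]
      omega

/-- Winquist's identity. -/
theorem hasSum_winquistTerm [CharZero K] {A B P Q : K⟦X⟧} {u v : K} (hu : u ≠ 0) (hv : v ≠ 0)
    (hA : HasSum (thetaTerm u) A) (hB : HasSum (thetaTerm v) B)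
    (hP : HasSum (thetaTerm (u * v)) P) (hQ : HasSum (thetaTerm (u / v)) Q) :
    HasSum (fun x : ℤ × ℤ ↦ winquistTerm u v x.1 x.2 * ((qProd fun _ ↦ 1) * qProd fun _ ↦ 1))
      (A * B * (P * Q)) := by
  have h := hasSum_mul (hasSum_mul hA hB) (hasSum_mul hP hQ)
  rw [← winquistEquiv.hasSum_iff] at h
  have h' : HasSum (fun x : (ℤ × ℤ) × (ℤ × ℤ) ↦ winquistSummand u v x.1.1 x.1.2 x.2.1 x.2.2)
      (A * B * (P * Q)) := by
    refine hasSum_of_forall_eq h fun ⟨⟨s, t⟩, ⟨k, l⟩⟩ ↦ ?_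
    simp only [Function.comp_apply, winquistEquiv, Equiv.coe_fn_mk]
    rw [thetaTerm_mul_thetaTerm hu hv, winquistSummand, winquistExponent]
    congr 4 <;> ring_nf
  refine h'.prod_fiberwise fun ⟨s, t⟩ ↦ ?_
  by_cases hst : 3 ∣ s + t ∨ 3 ∣ s - t
  · have hs := (summable_fiber h'.summable (s, t)).hasSum
    have h0 := eq_zero_of_hasSum_winquistSummand hs hst
    rw [h0] at hs
    simp only [winquistTerm, if_pos hst, zero_mul]
    exact hs
  · exact hasSum_winquistSummand u v hst

theorem coeff_crank_eleven [CharZero K] {ζ : K} (hζ : IsPrimitiveRoot ζ 11) (n : ℕ)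
    (hn : n % 11 = 6) :
    coeff n ((qProd fun _ ↦ 1) * (qProd fun _ ↦ C ζ)⁻¹ * (qProd fun _ ↦ C ζ⁻¹)⁻¹) = 0 := by
  have h0 : ζ ≠ 0 := hζ.ne_zero (by simp)
  have hc (j : ℕ) (hj : j ≠ 0) (hj' : j < 11) : 1 - ζ ^ j ≠ 0 := fun h ↦
    hζ.pow_ne_one_of_pos_of_lt hj hj' (sub_eq_zero.1 h).symm
  have hinv (i j : ℕ) (h : i + j = 11) : (ζ ^ i)⁻¹ = ζ ^ j :=
    inv_eq_of_mul_eq_one_right (by rw [← pow_add, h, hζ.pow_eq_one])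
  have hinv1 : ζ⁻¹ = ζ ^ 10 := by simpa using hinv 1 10 (by norm_num)
  refine coeff_crankSeries_eq_zero (by norm_num) hζ
    (mul_ne_zero (mul_ne_zero (hc 5 (by norm_num) (by norm_num)) (hc 2 (by norm_num) (by norm_num)))
      (mul_ne_zero (hc 7 (by norm_num) (by norm_num)) (hc 3 (by norm_num) (by norm_num))))
    (fun n hn ↦ ?_) n hn
  have hmul : ζ ^ 5 * ζ ^ 2 = ζ ^ 7 := by ring
  have hdiv : ζ ^ 5 / ζ ^ 2 = ζ ^ 3 := by field_simp
  have hsum := hasSum_winquistTerm (pow_ne_zero 5 h0) (pow_ne_zero 2 h0)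
    (hasSum_thetaTerm (pow_ne_zero 5 h0)) (hasSum_thetaTerm (pow_ne_zero 2 h0))
    (hmul ▸ hasSum_thetaTerm (pow_ne_zero 7 h0)) (hdiv ▸ hasSum_thetaTerm (pow_ne_zero 3 h0))
  have he := qProd_mul_inv fun _ ↦ (1 : K⟦X⟧)
  have hsum' := hasSum_of_forall_eq (g := fun x : ℤ × ℤ ↦ winquistTerm (ζ ^ 5) (ζ ^ 2) x.1 x.2)
    (hsum.mul_right ((qProd fun _ ↦ 1)⁻¹ * (qProd fun _ ↦ 1)⁻¹)) fun x ↦ by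
      rw [mul_assoc, mul_mul_mul_comm, he, mul_one, mul_one]
  refine Eq.trans (congrArg _ ?_) (coeff_eq_zero_of_hasSum_of_equiv hsum' n
    (Equiv.prodComm ℤ ℤ) fun x ↦ coeff_winquistTerm_swap hζ hn x.1 x.2)
  have h1 := qProd_mul_inv fun _ ↦ C ζ
  have h10 := qProd_mul_inv fun _ ↦ C ζ⁻¹
  simp only [Finset.prod_range_succ, Finset.prod_range_zero, pow_zero, pow_one, map_one,
    hmul, hdiv, hinv1, hinv 5 6 (by norm_num), hinv 2 9 (by norm_num), hinv 7 4 (by norm_num),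
    hinv 3 8 (by norm_num), map_mul] at h1 h10 ⊢
  generalize (qProd fun _ ↦ C ζ)⁻¹ = i1 at *
  generalize (qProd fun _ ↦ C (ζ ^ 10))⁻¹ = i10 at *
  generalize (qProd fun _ ↦ (1 : K⟦X⟧))⁻¹ = ie at *
  generalize (qProd fun _ ↦ C ζ) = p1 at *
  generalize (qProd fun _ ↦ C (ζ ^ 2)) = p2 at *
  generalize (qProd fun _ ↦ C (ζ ^ 3)) = p3 at *
  generalize (qProd fun _ ↦ C (ζ ^ 4)) = p4 at *
  generalize (qProd fun _ ↦ C (ζ ^ 5)) = p5 at *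
  generalize (qProd fun _ ↦ C (ζ ^ 6)) = p6 at *
  generalize (qProd fun _ ↦ C (ζ ^ 7)) = p7 at *
  generalize (qProd fun _ ↦ C (ζ ^ 8)) = p8 at *
  generalize (qProd fun _ ↦ C (ζ ^ 9)) = p9 at *
  generalize (qProd fun _ ↦ C (ζ ^ 10)) = p10 at *
  generalize (qProd fun _ ↦ (1 : K⟦X⟧)) = e at *
  generalize C (1 - ζ ^ 2) = c2 at *
  generalize C (1 - ζ ^ 3) = c3 at *
  generalize C (1 - ζ ^ 5) = c5 at *
  generalize C (1 - ζ ^ 7) = c7 at *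
  linear_combination c2 * c3 * c5 * c7 * p2 * p3 * p4 * p5 * p6 * p7 * p8 * p9 * e * e *
    (h1 * p10 * i10 + h10 - he * (e * ie + 1))

end Eleven

section Equidistribution

theorem sum_zpow_crank_eq_zero_of_coeff {K : Type*} [Field K] {n : ℕ} (hn : 2 ≤ n) {ζ : K}
    (h0 : ζ ≠ 0) (h : ∀ [TopologicalSpace K] [DiscreteTopology K],
      coeff n ((qProd fun _ ↦ 1) * (qProd fun _ ↦ C ζ)⁻¹ * (qProd fun _ ↦ C ζ⁻¹)⁻¹) = 0) :
    ∑ p : n.Partition, ζ ^ p.crank = 0 := by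
  let : TopologicalSpace K := ⊥
  have : DiscreteTopology K := ⟨rfl⟩
  rw [sum_zpow_crank hn h0, h]

theorem sum_range_zpow {K : Type*} [Field K] {t : ℕ} {ζ : K}
    (hζ : IsPrimitiveRoot ζ t) (d : ℤ) :
    ∑ j ∈ Finset.range t, (ζ ^ j) ^ d = if (t : ℤ) ∣ d then (t : K) else 0 := by
  have hcomm (j : ℕ) : (ζ ^ j) ^ d = (ζ ^ d) ^ j := by
    rw [← zpow_natCast, ← zpow_natCast, ← zpow_mul, ← zpow_mul, mul_comm]
  simp only [hcomm]
  split_ifs with h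
  · simp [(hζ.zpow_eq_one_iff_dvd d).2 h]
  · have h1 : ζ ^ d ≠ 1 := fun h1 ↦ h ((hζ.zpow_eq_one_iff_dvd d).1 h1)
    rw [geom_sum_eq h1, ← hcomm, hζ.pow_eq_one, one_zpow, sub_self, zero_div]

/-- If all nontrivial character sums vanish, the crank is equidistributed modulo `t`. -/
theorem card_crank_modEq {t n : ℕ} (ht : t.Prime)
    (h : ∀ ζ : ℂ, IsPrimitiveRoot ζ t → ∑ p : n.Partition, ζ ^ p.crank = 0) (k : ℤ) :
    (Nat.card {p : n.Partition // p.crank ≡ k [ZMOD t]} : ℚ) = (Nat.card n.Partition : ℚ) / t := by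
  have hζ := Complex.isPrimitiveRoot_exp t ht.ne_zero
  generalize Complex.exp (2 * Real.pi * Complex.I / t) = ζ at hζ
  have h0 : ζ ≠ 0 := hζ.ne_zero ht.ne_zero
  have hdouble : ∑ p : n.Partition, ∑ j ∈ Finset.range t, (ζ ^ j) ^ (p.crank - k) =
      Fintype.card n.Partition := by
    rw [Finset.sum_comm, Finset.sum_eq_single_of_mem 0 (Finset.mem_range.2 ht.pos)]
    · simp
    · intro j hj hj0
      have hprim := hζ.pow_of_coprime j
        (Nat.coprime_of_lt_prime hj0 (Finset.mem_range.1 hj) ht).symm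
      simp only [zpow_sub₀ (pow_ne_zero j h0)]
      rw [← Finset.sum_div, h _ hprim, zero_div]
  simp only [sum_range_zpow hζ] at hdouble
  rw [← Finset.sum_filter, Finset.sum_const, nsmul_eq_mul, ← Fintype.card_subtype] at hdouble
  rw [eq_div_iff (by exact_mod_cast ht.ne_zero), Nat.card_eq_fintype_card,
    Nat.card_eq_fintype_card]
  have hcard : Fintype.card {p : n.Partition // p.crank ≡ k [ZMOD t]} =
      Fintype.card {p : n.Partition // (t : ℤ) ∣ p.crank - k} :=
    Fintype.card_congr (Equiv.subtypeEquivRight fun p ↦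
      Int.modEq_comm.trans Int.modEq_iff_dvd)
  rw [hcard]
  exact_mod_cast hdouble

end Equidistribution

end CrankSeries

/-- Andrews–Garvan: the crank witnesses all three Ramanujan congruences:
`M(k,5,5n+4) = p(5n+4)/5`, `M(k,7,7n+5) = p(7n+5)/7`, and `M(k,11,11n+6) = p(11n+6)/11`,
where `M(k,t,m)` counts partitions of `m` with crank congruent to `k` modulo `t`. -/
theorem andrews_garvan_crank (n : ℕ) :
    (∀ k : ℤ, 0 ≤ k → k ≤ 4 →
      (Nat.card {π : Nat.Partition (5 * n + 4) // π.crank ≡ k [ZMOD 5]} : ℚ) =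
        (Nat.card (Nat.Partition (5 * n + 4)) : ℚ) / 5) ∧
    (∀ k : ℤ, 0 ≤ k → k ≤ 6 →
      (Nat.card {π : Nat.Partition (7 * n + 5) // π.crank ≡ k [ZMOD 7]} : ℚ) =
        (Nat.card (Nat.Partition (7 * n + 5)) : ℚ) / 7) ∧
    (∀ k : ℤ, 0 ≤ k → k ≤ 10 →
      (Nat.card {π : Nat.Partition (11 * n + 6) // π.crank ≡ k [ZMOD 11]} : ℚ) =
        (Nat.card (Nat.Partition (11 * n + 6)) : ℚ) / 11) := by
  refine ⟨fun k _ _ ↦ ?_, fun k _ _ ↦ ?_, fun k _ _ ↦ ?_⟩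
  · refine CrankSeries.card_crank_modEq (by norm_num) (fun ζ hζ ↦ ?_) k
    exact CrankSeries.sum_zpow_crank_eq_zero_of_coeff (by omega) (hζ.ne_zero (by norm_num))
      (CrankSeries.coeff_crank_five hζ _ (by omega))
  · refine CrankSeries.card_crank_modEq (by norm_num) (fun ζ hζ ↦ ?_) k
    exact CrankSeries.sum_zpow_crank_eq_zero_of_coeff (by omega) (hζ.ne_zero (by norm_num))
      (CrankSeries.coeff_crank_seven hζ _ (by omega))
  · refine CrankSeries.card_crank_modEq (by norm_num) (fun ζ hζ ↦ ?_) k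
    exact CrankSeries.sum_zpow_crank_eq_zero_of_coeff (by omega) (hζ.ne_zero (by norm_num))
      (CrankSeries.coeff_crank_eleven hζ _ (by omega))
end
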